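/- Let φ(x,t) = t^p + a(x) t^q with 1 < p < q < ∞ and a a nonnegative function in C^{0,α}(ℝⁿ) for some α ∈ (0,1]. Assume E ⊆ ℝⁿ is a closed set which is locally uniformly infimally φ-fat with constant c_fat > 0 and radius 0 < r_o ≤ 1. Then there exist ε = ε(n,p,q,c_fat) with 0 < ε < p − 1, a constant ĉ_fat = ĉ_fat(n,p,q,c_fat) > 0, and a radius 0 < r̂_o ≤ 1 depending only on n,p,q and r_o, such that E is locally uniformly infimally φ^{1−ε/p}-fat with constant ĉ_fat and radius r̂_o, where the integrand φ^{1−ε/p}(x,t) = (t^p + a(x) t^q)^{1−ε/p} and its infimal capacity is defined with normalization ((φ_O^-)(t))^{1−ε/p}. -/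

import Mathlib

open MeasureTheory Metric Set

noncomputable section

/-- Euclidean space `ℝⁿ`. -/
abbrev En (n : ℕ) : Type := EuclideanSpace ℝ (Fin n)

/-- Norm of the (a.e. defined, by Rademacher's theorem) gradient of `u` at `x`. -/
def gnorm {n : ℕ} (u : En n → ℝ) (x : En n) : ℝ := ‖fderiv ℝ u x‖

/-- Admissible test functions for the level-`t` capacity of `E` in `O`:
Lipschitz on the closure of `O`, `u ≥ t` on `E`, `u = 0` on `∂O`. -/
def Adm {n : ℕ} (E O : Set (En n)) (t : ℝ) : Set (En n → ℝ) :=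
  {u | (∃ K, LipschitzOnWith K u (closure O)) ∧ (∀ x ∈ E, t ≤ u x) ∧
    ∀ x ∈ frontier O, u x = 0}

/-- Level-`t` variational capacity with integrand `ψ` and normalization `ψm`. -/
def capLevel {n : ℕ} (ψ : En n → ℝ → ℝ) (ψm : ℝ → ℝ)
    (E O : Set (En n)) (t : ℝ) : ℝ :=
  sInf ((fun u => ∫ x in O, ψ x (gnorm u x) / ψm t) '' Adm E O t)

/-- Infimal capacity with integrand `ψ` and normalization `ψm`. -/
def capInfGen {n : ℕ} (ψ : En n → ℝ → ℝ) (ψm : ℝ → ℝ) (E O : Set (En n)) : ℝ :=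
  ⨅ t : Ioi (0 : ℝ), capLevel ψ ψm E O (t : ℝ)

/-- The double-phase integrand `φ(x,t) = t^p + a(x) t^q`. -/
def phi {n : ℕ} (a : En n → ℝ) (p q : ℝ) (x : En n) (t : ℝ) : ℝ :=
  t ^ p + a x * t ^ q

/-- `a_O^- = inf_{x ∈ O} a(x)`. -/
def aInfOn {n : ℕ} (a : En n → ℝ) (O : Set (En n)) : ℝ := sInf (a '' O)

/-- `a_O^+ = sup_{x ∈ O} a(x)`. -/
def aSupOn {n : ℕ} (a : En n → ℝ) (O : Set (En n)) : ℝ := sSup (a '' O)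

/-- `φ_O^-(t) = t^p + a_O^- t^q`. -/
def phiMinus {n : ℕ} (a : En n → ℝ) (p q : ℝ) (O : Set (En n)) (t : ℝ) : ℝ :=
  t ^ p + aInfOn a O * t ^ q

/-- Level-`t` variational capacity for the double-phase integrand. -/
def capPhiLevel {n : ℕ} (a : En n → ℝ) (p q t : ℝ) (E O : Set (En n)) : ℝ :=
  capLevel (phi a p q) (phiMinus a p q O) E O t

/-- Infimal `φ`-capacity. -/
def capPhiInf {n : ℕ} (a : En n → ℝ) (p q : ℝ) (E O : Set (En n)) : ℝ :=
  ⨅ t : Ioi (0 : ℝ), capPhiLevel a p q (t : ℝ) E O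

/-- Variational `p`-capacity. -/
def capP {n : ℕ} (p : ℝ) (E O : Set (En n)) : ℝ :=
  sInf ((fun u => ∫ x in O, gnorm u x ^ p) '' Adm E O 1)

/-- The rescaled set `{x ∈ B̄(0,1/2) : z + r x ∈ E}`. -/
def shiftedSet {n : ℕ} (E : Set (En n)) (z : En n) (r : ℝ) : Set (En n) :=
  {x ∈ closedBall (0 : En n) (1 / 2) | z + r • x ∈ E}

/-- Local uniform infimal `φ`-fatness with parameters `cfat` and `ro`. -/
def LocUnifPhiFat {n : ℕ} (a : En n → ℝ) (p q : ℝ) (E : Set (En n))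
    (cfat ro : ℝ) : Prop :=
  ∀ z ∈ E, ∀ r : ℝ, 0 < r → r < ro →
    cfat ≤ capPhiInf (fun x => a (z + r • x)) p q (shiftedSet E z r) (ball (0 : En n) 1)

/-- Local uniform `p`-fatness with parameters `cfat` and `ro`. -/
def LocUnifPFat {n : ℕ} (p : ℝ) (E : Set (En n)) (cfat ro : ℝ) : Prop :=
  ∀ z ∈ E, ∀ r : ℝ, 0 < r → r < ro →
    cfat ≤ capP p (shiftedSet E z r) (ball (0 : En n) 1)

/-- `Lip_0(Ω)`: Lipschitz functions with compact support contained in `Ω`,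
extended by zero to `ℝⁿ`. -/
def Lip0 {n : ℕ} (Ω : Set (En n)) : Set (En n → ℝ) :=
  {u | (∃ K, LipschitzWith K u) ∧ HasCompactSupport u ∧ tsupport u ⊆ Ω}

/-- Restricted centered maximal operator `M_R f(x) = sup_{0<r<R} ⨍_{B(x,r)} |f|`. -/
def maxOp {n : ℕ} (R : ℝ) (f : En n → ℝ) (x : En n) : ℝ :=
  ⨆ r : Ioo (0 : ℝ) R, ⨍ y in ball x (r : ℝ), |f y|

/-- Local uniform infimal fatness for the powered double-phase integrand
`φ^γ(x,t) = (t^p + a(x) t^q)^γ`, with normalization `(φ_O^-(t))^γ`. -/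
def LocUnifPhiPowFat {n : ℕ} (a : En n → ℝ) (p q γ : ℝ) (E : Set (En n))
    (cfat ro : ℝ) : Prop :=
  ∀ z ∈ E, ∀ r : ℝ, 0 < r → r < ro →
    cfat ≤ capInfGen (fun x s => phi a p q (z + r • x) s ^ γ)
        (fun s => phiMinus (fun x => a (z + r • x)) p q (ball (0 : En n) 1) s ^ γ)
        (shiftedSet E z r) (ball (0 : En n) 1)

/-!
Letting the level `t` tend to `0` in the infimal `φ`-capacity removes the `q`-term, because
`t ^ (q - p) → 0` and the coefficient is bounded on the ball. Infimal `φ`-fatness is therefore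
uniform `p`-fatness tested on Lipschitz functions, and it remains to lower the exponent `p`.

Let `f = 1 - v` be Lipschitz with values in `[0, 1]` and vanish on `F ∩ closedBall 0 (1 / 2)`. Off
the set where the maximal function of `‖∇f‖` or a Hardy-type maximal function of `f` centred on `F`
exceeds `λ`, `f` is Lipschitz with constant comparable to `λ`, so that it has McShane truncations
at the levels `λ 2 ^ j`, `k ≤ j < 2 k`. The gradients of these truncations essentially live on
disjoint pieces of the bad sets, hence the average of the `k` truncations has `p`-energy smaller by
the factor `k ^ (1 - p)`. Testing fatness with a cutoff of this average yields a good-`λ`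
inequality with a gain as `k → ∞`, which survives summation over dyadic levels with the weight
`2 ^ (i * (p - ε))` when `ε` is small. This bounds the `(p - ε)`-energy of `f` from below.

Finally, with `γ = 1 - ε / p` and `δ ∈ (0, 1]`, the powered integrand at a gradient of size `g`,
normalized at level `t`, is at least `δ ^ ((q - p) * γ) * ((g / t) ^ (p * γ) - δ ^ (p * γ))`:
gradients below `δ t` carry little energy, the others see both phases.
-/

open Module (finrank)

/-! ### Poincaré inequality on balls -/

section Average

variable {X F : Type*} [MeasurableSpace X] [NormedAddCommGroup F] [NormedSpace ℝ F]
  [CompleteSpace F] {μ : Measure X} {s : Set X} {u : X → F}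

lemma setAverage_sub_const (hs₀ : μ s ≠ 0) (hs : μ s ≠ ⊤) (hu : IntegrableOn u s μ) (m : F) :
    (⨍ x in s, u x ∂μ) - m = ⨍ x in s, (u x - m) ∂μ := by
  have hc : IntegrableOn (fun _ => m) s μ := integrableOn_const hs
  conv_lhs => rw [← setAverage_const hs₀ hs m]
  simp only [setAverage_eq, integral_sub hu hc, smul_sub]

lemma enorm_setAverage_sub_le (hs₀ : μ s ≠ 0) (hs : μ s ≠ ⊤) (hu : IntegrableOn u s μ) (m : F) :
    ‖(⨍ x in s, u x ∂μ) - m‖ₑ ≤ ⨍⁻ x in s, ‖u x - m‖ₑ ∂μ := by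
  rw [setAverage_sub_const hs₀ hs hu]
  exact enorm_integral_le_lintegral_enorm _

lemma norm_setAverage_sub_le (hs₀ : μ s ≠ 0) (hs : μ s ≠ ⊤) (hu : IntegrableOn u s μ) (m : F) :
    ‖(⨍ x in s, u x ∂μ) - m‖ ≤ (μ.real s)⁻¹ * ∫ x in s, ‖u x - m‖ ∂μ := by
  rw [setAverage_sub_const hs₀ hs hu, ← smul_eq_mul, ← setAverage_eq]
  exact norm_integral_le_integral_norm _

end Average

section Ball

variable {X : Type*} [MetricSpace X] [ProperSpace X] [MeasurableSpace X]
  {μ : Measure X} [IsLocallyFiniteMeasure μ]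

lemma measureReal_ball_pos [μ.IsOpenPosMeasure] (z : X) {ρ : ℝ} (hρ : 0 < ρ) :
    0 < μ.real (ball z ρ) :=
  ENNReal.toReal_pos (measure_ball_pos _ _ hρ).ne' measure_ball_lt_top.ne

lemma integrableOn_ball_of_continuous [OpensMeasurableSpace X] {u : X → ℝ} (hu : Continuous u)
    (z : X) (ρ : ℝ) : IntegrableOn u (ball z ρ) μ :=
  (hu.continuousOn.integrableOn_compact (isCompact_closedBall z ρ)).mono_set ball_subset_closedBall

end Ball

lemma enorm_sub_le_lintegral_line {E : Type*} [NormedAddCommGroup E] [NormedSpace ℝ E]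
    {u : E → ℝ} {K : NNReal} (hu : LipschitzWith K u) {x h : E}
    (hx : ∀ᵐ t : ℝ, DifferentiableAt ℝ u (x + t • h)) :
    ‖u (x + h) - u x‖ₑ ≤ ∫⁻ t in Ioc (0 : ℝ) 1, ‖h‖ₑ * ‖fderiv ℝ u (x + t • h)‖ₑ := by
  have hline : ∀ t : ℝ, HasDerivAt (fun t : ℝ => x + t • h) h t := fun t => by
    simpa using ((hasDerivAt_id t).smul_const h).const_add x
  have hlip : LipschitzWith (K * ‖h‖₊) fun t : ℝ => u (x + t • h) := by
    refine hu.comp (LipschitzWith.of_dist_le_mul fun s t => ?_)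
    rw [dist_add_left, dist_eq_norm, ← sub_smul, norm_smul, dist_eq_norm, mul_comm]
    rfl
  have hftc := (hlip.lipschitzOnWith
    (s := uIcc (0 : ℝ) 1)).absolutelyContinuousOnInterval.integral_deriv_eq_sub
  simp only [one_smul, zero_smul, add_zero] at hftc
  rw [← hftc, intervalIntegral.integral_of_le zero_le_one]
  refine (enorm_integral_le_lintegral_enorm _).trans (lintegral_mono_ae ?_)
  filter_upwards [ae_restrict_of_ae hx] with t ht
  have hd : HasDerivAt (fun t : ℝ => u (x + t • h)) (fderiv ℝ u (x + t • h) h) t :=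
    ht.hasFDerivAt.comp_hasDerivAt t (hline t)
  rw [hd.deriv, mul_comm]
  exact (fderiv ℝ u (x + t • h)).le_opENorm h

section Poincare

variable {E : Type*} [NormedAddCommGroup E] [NormedSpace ℝ E] [FiniteDimensional ℝ E]
  [MeasurableSpace E] [BorelSpace E] {μ : Measure E} [μ.IsAddHaarMeasure]
  {u : E → ℝ} {K : NNReal}

lemma measureReal_ball_mul (y z : E) {ρ s : ℝ} (hs : 0 < s) :
    μ.real (ball y (s * ρ)) = s ^ finrank ℝ E * μ.real (ball z ρ) := by
  rw [Measure.addHaar_real_ball_center μ z, measureReal_def, Measure.addHaar_ball_mul_of_pos μ y hs,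
    ENNReal.toReal_mul, ENNReal.toReal_ofReal (by positivity), measureReal_def]

lemma integrableOn_ball_norm_fderiv (hu : LipschitzWith K u) (z : E) (ρ : ℝ) :
    IntegrableOn (fun x => ‖fderiv ℝ u x‖) (ball z ρ) μ := by
  refine Measure.integrableOn_of_bounded (M := K) measure_ball_lt_top.ne
    (measurable_fderiv ℝ u).norm.aestronglyMeasurable (.of_forall fun x => ?_)
  rw [norm_norm]
  exact norm_fderiv_le_of_lipschitz ℝ hu

lemma ae_ae_differentiableAt_add_smul (hu : LipschitzWith K u) (h : E) :
    ∀ᵐ x ∂μ, ∀ᵐ t : ℝ, DifferentiableAt ℝ u (x + t • h) := by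
  have hm : MeasurableSet {w : E × ℝ | DifferentiableAt ℝ u (w.1 + w.2 • h)} :=
    (measurableSet_of_differentiableAt ℝ u).preimage
      (by fun_prop : Measurable fun w : E × ℝ => w.1 + w.2 • h)
  rw [Measure.ae_ae_comm hm]
  exact .of_forall fun t =>
    (measurePreserving_add_right μ (t • h)).quasiMeasurePreserving.ae hu.ae_differentiableAt

lemma lintegral_enorm_translate_sub_le (hu : LipschitzWith K u) (h : E) {A : Set E}
    (hA : MeasurableSet A) (hc : Convex ℝ A) :
    ∫⁻ x in {x | x ∈ A ∧ x + h ∈ A}, ‖u (x + h) - u x‖ₑ ∂μ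
      ≤ ‖h‖ₑ * ∫⁻ x in A, ‖fderiv ℝ u x‖ₑ ∂μ := by
  set g : E → ENNReal := A.indicator fun x => ‖fderiv ℝ u x‖ₑ
  have hAh : MeasurableSet {x : E | x ∈ A ∧ x + h ∈ A} :=
    hA.inter (hA.preimage (by fun_prop : Measurable fun x : E => x + h))
  have hg : Measurable g := (measurable_fderiv ℝ u).enorm.indicator hA
  calc ∫⁻ x in {x | x ∈ A ∧ x + h ∈ A}, ‖u (x + h) - u x‖ₑ ∂μ
      ≤ ∫⁻ x in {x | x ∈ A ∧ x + h ∈ A}, (∫⁻ t in Ioc (0 : ℝ) 1, ‖h‖ₑ * g (x + t • h)) ∂μ := by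
        refine lintegral_mono_ae ?_
        filter_upwards [ae_restrict_of_ae (ae_ae_differentiableAt_add_smul hu h),
          ae_restrict_mem hAh] with x hx hxA
        refine (enorm_sub_le_lintegral_line hu hx).trans (lintegral_mono_ae ?_)
        filter_upwards [ae_restrict_mem measurableSet_Ioc] with t ht
        have hmem : x + t • h ∈ A := hc.add_smul_mem hxA.1 hxA.2 ⟨ht.1.le, ht.2⟩
        simp only [g, indicator_of_mem hmem, le_refl]
    _ ≤ ∫⁻ x, (∫⁻ t in Ioc (0 : ℝ) 1, ‖h‖ₑ * g (x + t • h)) ∂μ := setLIntegral_le_lintegral _ _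
    _ = ∫⁻ t in Ioc (0 : ℝ) 1, (∫⁻ x, ‖h‖ₑ * g (x + t • h) ∂μ) := by
        refine lintegral_lintegral_swap (Measurable.aemeasurable ?_)
        exact (hg.comp (by fun_prop : Measurable fun w : E × ℝ => w.1 + w.2 • h)).const_mul _
    _ = ∫⁻ _t in Ioc (0 : ℝ) 1, ‖h‖ₑ * ∫⁻ x in A, ‖fderiv ℝ u x‖ₑ ∂μ := by
        refine lintegral_congr fun t => ?_
        rw [lintegral_const_mul' _ _ enorm_ne_top, lintegral_add_right_eq_self g,
          lintegral_indicator hA]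
    _ = ‖h‖ₑ * ∫⁻ x in A, ‖fderiv ℝ u x‖ₑ ∂μ := by simp

lemma setLIntegral_setLIntegral_eq_lintegral_translate {A : Set E} (hA : MeasurableSet A)
    {g : E → E → ENNReal} (hg : Measurable fun w : E × E => g w.1 w.2) :
    ∫⁻ x in A, ∫⁻ y in A, g x y ∂μ ∂μ
      = ∫⁻ h, ∫⁻ x in {x | x ∈ A ∧ x + h ∈ A}, g x (x + h) ∂μ ∂μ := by
  have hadd : Measurable fun w : E × E => w.1 + w.2 := by fun_prop
  set D : Set (E × E) := {w | w.1 ∈ A ∧ w.1 + w.2 ∈ A}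
  have hD : MeasurableSet D := (hA.preimage measurable_fst).inter (hA.preimage hadd)
  set G : E × E → ENNReal := D.indicator fun w => g w.1 (w.1 + w.2)
  have hG : Measurable G := (hg.comp (measurable_fst.prodMk hadd)).indicator hD
  have hinner : ∀ x, ∫⁻ h, G (x, h) ∂μ = A.indicator (fun x => ∫⁻ y in A, g x y ∂μ) x := by
    intro x
    by_cases hx : x ∈ A
    · rw [indicator_of_mem hx, ← lintegral_indicator hA,
        ← lintegral_add_left_eq_self (A.indicator (g x)) x]
      exact lintegral_congr fun h => indicator_eq_indicator (and_iff_right hx) rfl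
    · simp [G, D, indicator, hx]
  calc ∫⁻ x in A, ∫⁻ y in A, g x y ∂μ ∂μ
      = ∫⁻ x, ∫⁻ h, G (x, h) ∂μ ∂μ := by simp_rw [hinner, lintegral_indicator hA]
    _ = ∫⁻ h, ∫⁻ x, G (x, h) ∂μ ∂μ := lintegral_lintegral_swap hG.aemeasurable
    _ = _ := by
        refine lintegral_congr fun h => ?_
        have hDh : MeasurableSet {x | x ∈ A ∧ x + h ∈ A} := hD.preimage measurable_prodMk_right
        rw [← lintegral_indicator hDh]
        rfl

lemma lintegral_lintegral_enorm_sub_le (hu : LipschitzWith K u) (z : E) (ρ : ℝ) :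
    ∫⁻ x in ball z ρ, ∫⁻ y in ball z ρ, ‖u y - u x‖ₑ ∂μ ∂μ
      ≤ ENNReal.ofReal (2 * ρ) * (∫⁻ x in ball z ρ, ‖fderiv ℝ u x‖ₑ ∂μ)
        * μ (ball (0 : E) (2 * ρ)) := by
  have huc := hu.continuous
  set B := ball z ρ
  have hB : MeasurableSet B := measurableSet_ball
  rw [setLIntegral_setLIntegral_eq_lintegral_translate hB
    (g := fun x y => ‖u y - u x‖ₑ) (Continuous.measurable (by fun_prop)),
    ← setLIntegral_const, ← lintegral_indicator measurableSet_ball]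
  refine lintegral_mono fun h => ?_
  by_cases hh : h ∈ ball (0 : E) (2 * ρ)
  · rw [indicator_of_mem hh]
    refine (lintegral_enorm_translate_sub_le hu h hB (convex_ball z ρ)).trans ?_
    gcongr
    rw [← ofReal_norm]
    exact ENNReal.ofReal_le_ofReal (mem_ball_zero_iff.1 hh).le
  · have hempty : {x | x ∈ B ∧ x + h ∈ B} = ∅ := by
      refine eq_empty_of_forall_notMem fun x hx => hh ?_
      rw [mem_ball_zero_iff]
      calc ‖h‖ = dist (x + h) x := by simp
        _ ≤ dist (x + h) z + dist x z := dist_triangle_right _ _ _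
        _ < 2 * ρ := by linarith [mem_ball.1 hx.1, mem_ball.1 hx.2]
    rw [hempty, setLIntegral_empty]
    exact zero_le

lemma ofReal_integral_ball_norm_fderiv (hu : LipschitzWith K u) (z : E) (ρ : ℝ) :
    ENNReal.ofReal (∫ x in ball z ρ, ‖fderiv ℝ u x‖ ∂μ) = ∫⁻ x in ball z ρ, ‖fderiv ℝ u x‖ₑ ∂μ := by
  rw [ofReal_integral_eq_lintegral_ofReal (integrableOn_ball_norm_fderiv hu z ρ)
    (.of_forall fun _ => norm_nonneg _)]
  simp_rw [ofReal_norm]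

lemma integral_ball_abs_sub_average_le (hu : LipschitzWith K u) (z : E) {ρ : ℝ} (hρ : 0 < ρ) :
    ∫ x in ball z ρ, |u x - ⨍ y in ball z ρ, u y ∂μ| ∂μ
      ≤ 2 ^ (finrank ℝ E + 1) * ρ * ∫ x in ball z ρ, ‖fderiv ℝ u x‖ ∂μ := by
  set B := ball z ρ
  have hV : 0 < μ.real B := measureReal_ball_pos z hρ
  have hB : μ B ≠ ⊤ := measure_ball_lt_top.ne
  have hB₀ : μ B ≠ 0 := (measure_ball_pos μ z hρ).ne'
  have hint : IntegrableOn u B μ := integrableOn_ball_of_continuous hu.continuous z ρ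
  have hRHS : 0 ≤ ∫ x in B, ‖fderiv ℝ u x‖ ∂μ := integral_nonneg fun _ => norm_nonneg _
  rw [← ENNReal.ofReal_le_ofReal_iff (by positivity)]
  calc ENNReal.ofReal (∫ x in B, ‖u x - ⨍ y in B, u y ∂μ‖ ∂μ)
      = ∫⁻ x in B, ‖u x - ⨍ y in B, u y ∂μ‖ₑ ∂μ :=
        ofReal_integral_norm_eq_lintegral_enorm (hint.sub (integrableOn_const hB))
    _ ≤ ∫⁻ x in B, (μ B)⁻¹ * ∫⁻ y in B, ‖u y - u x‖ₑ ∂μ ∂μ := by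
        refine lintegral_mono fun x => ?_
        rw [enorm_sub_rev]
        refine (enorm_setAverage_sub_le hB₀ hB hint (u x)).trans_eq ?_
        rw [setLAverage_eq, ENNReal.div_eq_inv_mul]
    _ = (μ B)⁻¹ * ∫⁻ x in B, ∫⁻ y in B, ‖u y - u x‖ₑ ∂μ ∂μ :=
        lintegral_const_mul' _ _ (ENNReal.inv_ne_top.2 hB₀)
    _ ≤ (μ B)⁻¹ * (ENNReal.ofReal (2 * ρ) * (∫⁻ x in B, ‖fderiv ℝ u x‖ₑ ∂μ)
          * μ (ball (0 : E) (2 * ρ))) := by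
        gcongr
        exact lintegral_lintegral_enorm_sub_le hu z ρ
    _ = ENNReal.ofReal ((μ.real B)⁻¹ * (2 * ρ * (∫ x in B, ‖fderiv ℝ u x‖ ∂μ)
          * (2 ^ finrank ℝ E * μ.real B))) := by
        rw [ENNReal.ofReal_mul (inv_nonneg.2 hV.le),
          ENNReal.ofReal_mul (mul_nonneg (by positivity) hRHS),
          ENNReal.ofReal_mul (by positivity : 0 ≤ 2 * ρ), ofReal_integral_ball_norm_fderiv hu,
          ENNReal.ofReal_inv_of_pos hV, ofReal_measureReal hB,
          ← measureReal_ball_mul 0 z two_pos, ofReal_measureReal measure_ball_lt_top.ne]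
    _ = _ := by
        congr 1
        field_simp
        ring

end Poincare

/-! ### Maximal function -/

/-- The superlevel set `{M g > t}` of the uncentred maximal function of `g` over balls of radius at
most `1`. Averages are cleared of their denominators. -/
def maximalSet {X : Type*} [PseudoMetricSpace X] [MeasurableSpace X] (μ : Measure X) (g : X → ℝ)
    (t : ℝ) : Set X :=
  {x | ∃ y r, 0 < r ∧ r ≤ 1 ∧ x ∈ ball y r ∧ t * μ.real (ball y r) < ∫ w in ball y r, g w ∂μ}

section MaximalSet

variable {X : Type*} [PseudoMetricSpace X] [MeasurableSpace X] {μ : Measure X} {g : X → ℝ}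

lemma setIntegral_ball_le_of_notMem_maximalSet {t : ℝ} {x y : X} {r : ℝ} (hx : x ∉ maximalSet μ g t)
    (hr : 0 < r) (hr1 : r ≤ 1) (hxy : x ∈ ball y r) :
    ∫ w in ball y r, g w ∂μ ≤ t * μ.real (ball y r) := by
  by_contra! h
  exact hx ⟨y, r, hr, hr1, hxy, h⟩

lemma maximalSet_anti (μ : Measure X) (g : X → ℝ) : Antitone (maximalSet μ g) := by
  rintro s t hst x ⟨y, r, hr, hr1, hxy, h⟩
  exact ⟨y, r, hr, hr1, hxy, (mul_le_mul_of_nonneg_right hst measureReal_nonneg).trans_lt h⟩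

lemma isOpen_maximalSet (μ : Measure X) (g : X → ℝ) (t : ℝ) : IsOpen (maximalSet μ g t) := by
  refine isOpen_iff_forall_mem_open.2 ?_
  rintro x ⟨y, r, hr, hr1, hxy, h⟩
  exact ⟨ball y r, fun w hw => ⟨y, r, hr, hr1, hw, h⟩, isOpen_ball, hxy⟩

end MaximalSet

section LipschitzOffMaximalSet

variable {E : Type*} [NormedAddCommGroup E] [NormedSpace ℝ E] [FiniteDimensional ℝ E]
  [MeasurableSpace E] [BorelSpace E] {μ : Measure E} [μ.IsAddHaarMeasure]
  {u : E → ℝ} {K : NNReal}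

lemma abs_average_sub_average_le (hu : LipschitzWith K u) {x y : E} {r t : ℝ} (hr : 0 < r)
    (hsub : ball y r ⊆ ball x (2 * r))
    (ht : ∫ w in ball x (2 * r), ‖fderiv ℝ u w‖ ∂μ ≤ t * μ.real (ball x (2 * r))) :
    |(⨍ w in ball y r, u w ∂μ) - ⨍ w in ball x (2 * r), u w ∂μ|
      ≤ 4 ^ (finrank ℝ E + 1) * r * t := by
  have hV : 0 < μ.real (ball y r) := measureReal_ball_pos y hr
  have hint : ∀ z s, IntegrableOn u (ball z s) μ := integrableOn_ball_of_continuous hu.continuous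
  set m := ⨍ w in ball x (2 * r), u w ∂μ
  have habs : IntegrableOn (fun w => |u w - m|) (ball x (2 * r)) μ :=
    ((hint x (2 * r)).sub (integrableOn_const measure_ball_lt_top.ne)).abs
  calc |(⨍ w in ball y r, u w ∂μ) - m|
      ≤ (μ.real (ball y r))⁻¹ * ∫ w in ball y r, |u w - m| ∂μ :=
        norm_setAverage_sub_le (measure_ball_pos μ y hr).ne' measure_ball_lt_top.ne (hint y r) m
    _ ≤ (μ.real (ball y r))⁻¹ * ∫ w in ball x (2 * r), |u w - m| ∂μ := by
        refine mul_le_mul_of_nonneg_left ?_ (inv_nonneg.2 hV.le)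
        exact setIntegral_mono_set habs (.of_forall fun _ => abs_nonneg _) hsub.eventuallyLE
    _ ≤ (μ.real (ball y r))⁻¹ * (2 ^ (finrank ℝ E + 1) * (2 * r) *
          (t * μ.real (ball x (2 * r)))) := by
        gcongr
        refine (integral_ball_abs_sub_average_le hu x (by positivity)).trans ?_
        gcongr
    _ = 4 ^ (finrank ℝ E + 1) * r * t := by
        rw [measureReal_ball_mul x y two_pos, show (4 : ℝ) = 2 * 2 by norm_num, mul_pow]
        field_simp
        ring

lemma abs_average_ball_sub_self_le (hu : LipschitzWith K u) (x : E) {r : ℝ} (hr : 0 < r) :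
    |(⨍ w in ball x r, u w ∂μ) - u x| ≤ K * r := by
  have hint : IntegrableOn u (ball x r) μ := integrableOn_ball_of_continuous hu.continuous x r
  have hc : ∀ c : ℝ, IntegrableOn (fun _ => c) (ball x r) μ :=
    fun _ => integrableOn_const measure_ball_lt_top.ne
  refine (norm_setAverage_sub_le (measure_ball_pos μ x hr).ne' measure_ball_lt_top.ne hint
    (u x)).trans ?_
  rw [inv_mul_le_iff₀ (measureReal_ball_pos x hr), ← smul_eq_mul, ← setIntegral_const]
  refine setIntegral_mono_on (hint.sub (hc _)).norm (hc _) measurableSet_ball fun w hw => ?_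
  exact (hu.dist_le_mul w x).trans (by gcongr; exact (mem_ball.1 hw).le)

lemma abs_sub_average_ball_le_of_notMem_maximalSet (hu : LipschitzWith K u) {x y : E} {r t : ℝ}
    (hr : 0 < r) (hr1 : 2 * r ≤ 1) (hxy : dist x y ≤ r)
    (hx : x ∉ maximalSet μ (fun w => ‖fderiv ℝ u w‖) t) :
    |u x - ⨍ w in ball y r, u w ∂μ| ≤ 3 * 4 ^ (finrank ℝ E + 1) * r * t := by
  -- Telescope over concentric balls; their averages tend to `u x`.
  set a : ℕ → ℝ := fun m => ⨍ w in ball x (2 * r / 2 ^ m), u w ∂μ with ha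
  have hpos : ∀ m : ℕ, 0 < 2 * r / 2 ^ m := fun m => by positivity
  have hle : ∀ m : ℕ, 2 * r / 2 ^ m ≤ 1 := fun m =>
    (div_le_self (by positivity) (one_le_pow₀ one_le_two)).trans hr1
  have hstep : ∀ m, dist (a m) (a (m + 1)) ≤ 2 * 4 ^ (finrank ℝ E + 1) * r * t / 2 / 2 ^ m := by
    intro m
    have hrad : 2 * r / 2 ^ m = 2 * (2 * r / 2 ^ (m + 1)) := by field_simp; ring
    have h := setIntegral_ball_le_of_notMem_maximalSet hx (hpos m) (hle m) (mem_ball_self (hpos m))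
    rw [hrad] at h
    rw [dist_comm, Real.dist_eq, ha]
    beta_reduce
    rw [hrad]
    refine (abs_average_sub_average_le hu (hpos (m + 1))
      (ball_subset_ball (by linarith [hpos (m + 1)])) h).trans_eq ?_
    field_simp
    ring
  have hlim : Filter.Tendsto a Filter.atTop (nhds (u x)) := by
    rw [tendsto_iff_dist_tendsto_zero]
    refine squeeze_zero (fun _ => dist_nonneg)
      (fun m => abs_average_ball_sub_self_le hu x (hpos m)) ?_
    have h := (tendsto_pow_atTop_nhds_zero_of_lt_one (r := (1 / 2 : ℝ)) (by norm_num)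
      (by norm_num)).const_mul (K * (2 * r))
    rw [mul_zero] at h
    exact h.congr fun m => by rw [div_pow, one_pow]; ring
  have hconc : |(⨍ w in ball x (2 * r), u w ∂μ) - u x| ≤ 2 * 4 ^ (finrank ℝ E + 1) * r * t := by
    simpa [ha, Real.dist_eq] using dist_le_of_le_geometric_two_of_tendsto₀ hstep hlim
  have hshift : |(⨍ w in ball y r, u w ∂μ) - ⨍ w in ball x (2 * r), u w ∂μ|
      ≤ 4 ^ (finrank ℝ E + 1) * r * t :=
    abs_average_sub_average_le hu hr (ball_subset_ball' (by rw [dist_comm]; linarith))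
      (setIntegral_ball_le_of_notMem_maximalSet hx (by positivity) hr1
        (mem_ball_self (by positivity)))
  rw [abs_le] at *
  constructor <;> linarith [hconc.1, hconc.2, hshift.1, hshift.2]

lemma abs_sub_le_of_notMem_maximalSet (hu : LipschitzWith K u) {x y : E} {t : ℝ}
    (hxy : 2 * dist x y ≤ 1) (hx : x ∉ maximalSet μ (fun w => ‖fderiv ℝ u w‖) t)
    (hy : y ∉ maximalSet μ (fun w => ‖fderiv ℝ u w‖) t) :
    |u x - u y| ≤ 6 * 4 ^ (finrank ℝ E + 1) * t * dist x y := by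
  rcases (dist_nonneg (x := x) (y := y)).eq_or_lt with h | h
  · simp [dist_eq_zero.1 h.symm]
  · have hux := abs_sub_average_ball_le_of_notMem_maximalSet hu h hxy le_rfl hx
    have huy := abs_sub_average_ball_le_of_notMem_maximalSet (y := y) hu h hxy (by simp [h.le]) hy
    rw [abs_le] at *
    constructor <;> linarith [hux.1, hux.2, huy.1, huy.2]

lemma le_of_notMem_maximalSet_of_setIntegral_le (hu : LipschitzWith K u) {x z : E} {t : ℝ}
    (hxz : 0 < dist x z) (hxz1 : 4 * dist x z ≤ 1)
    (hx : x ∉ maximalSet μ (fun w => ‖fderiv ℝ u w‖) t)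
    (hz : ∫ w in ball z (2 * dist x z), u w ∂μ
      ≤ t * (2 * dist x z) * μ.real (ball z (2 * dist x z))) :
    u x ≤ (6 * 4 ^ (finrank ℝ E + 1) + 2) * t * dist x z := by
  have hosc := abs_sub_average_ball_le_of_notMem_maximalSet (y := z) (r := 2 * dist x z) hu
    (by linarith) (by linarith) (by linarith) hx
  have havg : ⨍ w in ball z (2 * dist x z), u w ∂μ ≤ t * (2 * dist x z) := by
    rw [setAverage_eq, smul_eq_mul, inv_mul_le_iff₀ (measureReal_ball_pos z (by linarith))]
    linarith
  linarith [(abs_le.1 hosc).2]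

end LipschitzOffMaximalSet

lemma measure_le_of_mul_measureReal_lt_setIntegral {X : Type*} [MeasurableSpace X] {μ : Measure X}
    {B : Set X} (hB : μ B ≠ ⊤) {g : X → ℝ} {t : ℝ} (ht : 0 < t)
    (h : t * μ.real B < ∫ x in B, g x ∂μ) :
    μ B ≤ ENNReal.ofReal (2 / t) *
      ∫⁻ x in B, {x | t / 2 < ‖g x‖}.indicator (fun x => ‖g x‖ₑ) x ∂μ := by
  set G : Set X := {x | t / 2 < ‖g x‖}
  have hlower : ENNReal.ofReal (t / 2) * μ B + ENNReal.ofReal (t / 2) * μ B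
      ≤ ∫⁻ x in B, ‖g x‖ₑ ∂μ := by
    rw [← add_mul, ← ENNReal.ofReal_add (by positivity) (by positivity), add_halves,
      ← ofReal_measureReal hB, ← ENNReal.ofReal_mul ht.le]
    refine le_trans ?_ (enorm_integral_le_lintegral_enorm _)
    rw [← ofReal_norm]
    exact ENNReal.ofReal_le_ofReal (h.le.trans (le_abs_self _))
  have hupper : ∫⁻ x in B, ‖g x‖ₑ ∂μ
      ≤ ENNReal.ofReal (t / 2) * μ B + ∫⁻ x in B, G.indicator (fun x => ‖g x‖ₑ) x ∂μ := by
    rw [← setLIntegral_const, ← lintegral_add_left measurable_const]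
    refine lintegral_mono fun x => ?_
    by_cases hx : x ∈ G
    · rw [indicator_of_mem hx]
      exact le_add_self
    · rw [indicator_of_notMem hx, add_zero, ← ofReal_norm]
      exact ENNReal.ofReal_le_ofReal (not_lt.1 hx)
  have hhalf := (ENNReal.add_le_add_iff_left (ENNReal.mul_ne_top ENNReal.ofReal_ne_top hB)).1
    (hlower.trans hupper)
  calc μ B = ENNReal.ofReal (2 / t) * (ENNReal.ofReal (t / 2) * μ B) := by
        rw [← mul_assoc, ← ENNReal.ofReal_mul (by positivity),
          div_mul_div_cancel₀ ht.ne', div_self two_ne_zero, ENNReal.ofReal_one, one_mul]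
    _ ≤ _ := by gcongr

section WeakType

variable {E : Type*} [NormedAddCommGroup E] [NormedSpace ℝ E] [FiniteDimensional ℝ E]
  [MeasurableSpace E] [BorelSpace E] {μ : Measure E} [μ.IsAddHaarMeasure]

lemma measure_le_of_ball_cover (ν : Measure E) (S : Set E) (R : ℝ)
    (hS : ∀ x ∈ S, ∃ y r, 0 < r ∧ r ≤ R ∧ x ∈ ball y r ∧ μ (ball y r) ≤ ν (ball y r)) :
    μ S ≤ ENNReal.ofReal (5 ^ finrank ℝ E) * ν univ := by
  set T : Set (E × ℝ) := {b | 0 < b.2 ∧ b.2 ≤ R ∧ μ (ball b.1 b.2) ≤ ν (ball b.1 b.2)}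
  obtain ⟨U, hUT, hdisj, hcov⟩ := Vitali.exists_disjoint_subfamily_covering_enlargement_closedBall
    T (fun b => b.1) (fun b => b.2) R (fun b hb => hb.2.1) 5 (by norm_num)
  have hUc : U.Countable := hdisj.countable_of_nonempty_interior fun b hb =>
    ⟨b.1, ball_subset_interior_closedBall (mem_ball_self (hUT hb).1)⟩
  have hdisj' : U.PairwiseDisjoint fun b => ball b.1 b.2 :=
    hdisj.mono fun b => ball_subset_closedBall
  calc μ S ≤ μ (⋃ b ∈ U, closedBall b.1 (5 * b.2)) := by
        refine measure_mono fun x hx => ?_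
        obtain ⟨y, r, hr, hrR, hxy, hν⟩ := hS x hx
        obtain ⟨b, hb, hsub⟩ := hcov (y, r) ⟨hr, hrR, hν⟩
        exact mem_biUnion hb (hsub (ball_subset_closedBall hxy))
    _ ≤ ∑' b : U, μ (closedBall b.1.1 (5 * b.1.2)) := measure_biUnion_le _ hUc _
    _ ≤ ∑' b : U, ENNReal.ofReal (5 ^ finrank ℝ E) * ν (ball b.1.1 b.1.2) := by
        refine ENNReal.tsum_le_tsum fun b => ?_
        obtain ⟨hr, -, hν⟩ := hUT b.2
        refine le_trans (le_of_eq ?_) (mul_le_mul_right hν _)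
        rw [Measure.addHaar_closedBall μ _ (by linarith), mul_pow,
          ENNReal.ofReal_mul (by positivity), mul_assoc, Measure.addHaar_ball_of_pos μ _ hr]
    _ = ENNReal.ofReal (5 ^ finrank ℝ E) * ν (⋃ b ∈ U, ball b.1 b.2) := by
        rw [ENNReal.tsum_mul_left, measure_biUnion hUc hdisj' fun _ _ => measurableSet_ball]
    _ ≤ _ := by gcongr; exact subset_univ _

lemma measure_maximalSet_le {g : E → ℝ} {t : ℝ} (ht : 0 < t) :
    μ (maximalSet μ g t) ≤ ENNReal.ofReal (5 ^ finrank ℝ E * (2 / t)) *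
      ∫⁻ x, {x | t / 2 < ‖g x‖}.indicator (fun x => ‖g x‖ₑ) x ∂μ := by
  set G : E → ENNReal := {x | t / 2 < ‖g x‖}.indicator fun x => ‖g x‖ₑ
  refine (measure_le_of_ball_cover (ENNReal.ofReal (2 / t) • μ.withDensity G) _ 1 ?_).trans_eq ?_
  · rintro x ⟨y, r, hr, hr1, hxy, hlt⟩
    refine ⟨y, r, hr, hr1, hxy, ?_⟩
    rw [Measure.smul_apply, withDensity_apply _ measurableSet_ball, smul_eq_mul]
    exact measure_le_of_mul_measureReal_lt_setIntegral measure_ball_lt_top.ne ht hlt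
  · rw [Measure.smul_apply, withDensity_apply _ .univ, Measure.restrict_univ, smul_eq_mul,
      ENNReal.ofReal_mul (by positivity), mul_assoc]

end WeakType

section StrongType

lemma sum_ite_two_pow_lt_le {σ X : ℝ} (hσ : 0 < σ) (hX : 0 ≤ X) (N : ℕ) :
    ∑ i ∈ Finset.range N, (if (2 : ℝ) ^ i < X then ((2 : ℝ) ^ σ) ^ i else 0)
      ≤ 2 ^ σ / (2 ^ σ - 1) * X ^ σ := by
  set b : ℝ := 2 ^ σ with hb
  have hb1 : 1 < b := Real.one_lt_rpow one_lt_two hσ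
  have : 0 < b - 1 := by linarith
  induction N with
  | zero => simp only [Finset.range_zero, Finset.sum_empty]; positivity
  | succ N ih =>
    by_cases h : (2 : ℝ) ^ N < X
    · have hbN : b ^ N ≤ X ^ σ := by
        rw [hb, Real.rpow_pow_comm zero_le_two]
        exact Real.rpow_le_rpow (by positivity) h.le hσ.le
      calc ∑ i ∈ Finset.range (N + 1), (if (2 : ℝ) ^ i < X then b ^ i else 0)
          ≤ ∑ i ∈ Finset.range (N + 1), b ^ i := by
            refine Finset.sum_le_sum fun i _ => ?_
            split_ifs
            · rfl
            · positivity
        _ = (b ^ (N + 1) - 1) / (b - 1) := geom_sum_eq hb1.ne' _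
        _ ≤ b * b ^ N / (b - 1) := by
            gcongr
            rw [pow_succ]; linarith
        _ ≤ b * X ^ σ / (b - 1) := by gcongr
        _ = _ := by ring
    · rw [Finset.sum_range_succ, if_neg h, add_zero]
      exact ih

lemma sum_ite_two_pow_lt_mul_le {s τ y : ℝ} (hs : 1 < s) (hτ : 0 < τ) (hy : 0 ≤ y) (N : ℕ) :
    ∑ i ∈ Finset.range N, (if τ * 2 ^ i / 2 < y then ((2 : ℝ) ^ (s - 1)) ^ i * y else 0)
      ≤ 2 ^ (s - 1) / (2 ^ (s - 1) - 1) * (2 / τ) ^ (s - 1) * y ^ s := by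
  have hiff : ∀ i : ℕ, τ * 2 ^ i / 2 < y ↔ (2 : ℝ) ^ i < 2 / τ * y := by
    intro i
    rw [div_lt_iff₀ two_pos, div_mul_eq_mul_div, lt_div_iff₀ hτ, mul_comm τ, mul_comm y]
  calc ∑ i ∈ Finset.range N, (if τ * 2 ^ i / 2 < y then ((2 : ℝ) ^ (s - 1)) ^ i * y else 0)
      = (∑ i ∈ Finset.range N, (if (2 : ℝ) ^ i < 2 / τ * y then ((2 : ℝ) ^ (s - 1)) ^ i else 0))
          * y := by simp_rw [hiff, Finset.sum_mul, ite_mul, zero_mul]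
    _ ≤ 2 ^ (s - 1) / (2 ^ (s - 1) - 1) * (2 / τ * y) ^ (s - 1) * y := by
        gcongr
        exact sum_ite_two_pow_lt_le (by linarith) (by positivity) N
    _ = 2 ^ (s - 1) / (2 ^ (s - 1) - 1) * (2 / τ) ^ (s - 1) * (y ^ (s - 1) * y) := by
        rw [Real.mul_rpow (by positivity) hy]
        ring
    _ = _ := by rw [← Real.rpow_add_one' hy (by linarith), sub_add_cancel]

variable {E : Type*} [NormedAddCommGroup E] [NormedSpace ℝ E] [FiniteDimensional ℝ E]
  [MeasurableSpace E] [BorelSpace E] {μ : Measure E} [μ.IsAddHaarMeasure]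

lemma two_rpow_pow_mul_measure_maximalSet_le {g : E → ℝ} (hg : Measurable g) {s τ : ℝ}
    (hτ : 0 < τ) (i : ℕ) :
    ENNReal.ofReal (((2 : ℝ) ^ s) ^ i) * μ (maximalSet μ g (τ * 2 ^ i))
      ≤ ENNReal.ofReal (5 ^ finrank ℝ E * (2 / τ)) * ∫⁻ x, ENNReal.ofReal
          (if τ * 2 ^ i / 2 < ‖g x‖ then ((2 : ℝ) ^ (s - 1)) ^ i * ‖g x‖ else 0) ∂μ := by
  have hG : MeasurableSet {x | τ * 2 ^ i / 2 < ‖g x‖} := measurableSet_lt measurable_const hg.norm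
  have hpow : ((2 : ℝ) ^ s) ^ i = ((2 : ℝ) ^ (s - 1)) ^ i * 2 ^ i := by
    rw [← mul_pow, Real.rpow_sub_one two_ne_zero, div_mul_cancel₀ _ two_ne_zero]
  have hcoef : ((2 : ℝ) ^ s) ^ i * (5 ^ finrank ℝ E * (2 / (τ * 2 ^ i)))
      = 5 ^ finrank ℝ E * (2 / τ) * ((2 : ℝ) ^ (s - 1)) ^ i := by
    rw [hpow]
    field_simp
  refine (mul_le_mul_right (measure_maximalSet_le (by positivity)) _).trans_eq ?_
  rw [← mul_assoc, ← ENNReal.ofReal_mul (by positivity), hcoef, ENNReal.ofReal_mul (by positivity),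
    mul_assoc, ← lintegral_const_mul _ (hg.enorm.indicator hG)]
  congr 2 with x
  simp only [indicator, mem_ofPred_eq]
  split_ifs
  · rw [ENNReal.ofReal_mul (by positivity), ofReal_norm]
  · simp

lemma tsum_measure_maximalSet_le {g : E → ℝ} (hg : Measurable g) {s τ : ℝ} (hs : 1 < s)
    (hτ : 0 < τ) :
    ∑' i : ℕ, ENNReal.ofReal (((2 : ℝ) ^ s) ^ i) * μ (maximalSet μ g (τ * 2 ^ i))
      ≤ ENNReal.ofReal (5 ^ finrank ℝ E * (2 / τ) *
          (2 ^ (s - 1) / (2 ^ (s - 1) - 1) * (2 / τ) ^ (s - 1)))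
        * ∫⁻ x, ENNReal.ofReal (‖g x‖ ^ s) ∂μ := by
  have hb0 : 0 < (2 : ℝ) ^ (s - 1) - 1 := by
    linarith [Real.one_lt_rpow one_lt_two (by linarith : 0 < s - 1)]
  refine (ENNReal.tsum_le_tsum (two_rpow_pow_mul_measure_maximalSet_le hg hτ)).trans ?_
  rw [ENNReal.tsum_mul_left, ← lintegral_tsum,
    ENNReal.ofReal_mul (p := 5 ^ finrank ℝ E * (2 / τ)) (by positivity), mul_assoc]
  · gcongr
    rw [← lintegral_const_mul _ (hg.norm.pow_const s).ennreal_ofReal]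
    refine lintegral_mono fun x => ENNReal.tsum_le_of_sum_range_le fun N => ?_
    rw [← ENNReal.ofReal_sum_of_nonneg fun i _ => by split_ifs <;> positivity,
      ← ENNReal.ofReal_mul (by positivity)]
    exact ENNReal.ofReal_le_ofReal (sum_ite_two_pow_lt_mul_le hs hτ (norm_nonneg _) N)
  · intro i
    exact (Measurable.ite (measurableSet_lt measurable_const hg.norm) (hg.norm.const_mul _)
      measurable_const).ennreal_ofReal.aemeasurable

end StrongType

/-! ### Lipschitz truncations and their averages -/

section Truncation

variable {E : Type*} [NormedAddCommGroup E] [NormedSpace ℝ E] [FiniteDimensional ℝ E]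
  [MeasurableSpace E] [BorelSpace E] {μ : Measure E} [μ.IsAddHaarMeasure]

lemma ae_fderiv_eq_of_eqOn {f g : E → ℝ} {K L : NNReal} (hf : LipschitzWith K f)
    (hg : LipschitzWith L g) {S : Set E} (hS : MeasurableSet S) (hfg : EqOn f g S) :
    ∀ᵐ x ∂μ, x ∈ S → fderiv ℝ f x = fderiv ℝ g x := by
  rcases subsingleton_or_nontrivial E with _ | _
  · exact .of_forall fun x _ => Subsingleton.elim _ _
  obtain ⟨e, he⟩ := exists_ne (0 : E)
  set N : Set E := {x | DifferentiableAt ℝ f x} ∩ {x | DifferentiableAt ℝ g x}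
  have hSN : MeasurableSet (S ∩ N) := hS.inter
    ((measurableSet_of_differentiableAt ℝ f).inter (measurableSet_of_differentiableAt ℝ g))
  -- The library states the vanishing of the derivative for self-maps of `E`.
  have happ : ApproximatesLinearOn (fun x => (f x - g x) • e) (0 : E →L[ℝ] E) (S ∩ N) 0 := by
    intro x hx y hy
    simp [hfg hx.1, hfg hy.1]
  have hzero := happ.norm_fderiv_sub_le μ hSN
    (fun x => (fderiv ℝ f x - fderiv ℝ g x).smulRight e) fun x hx =>
      ((hx.2.1.hasFDerivAt.sub hx.2.2.hasFDerivAt).smul_const e).hasFDerivWithinAt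
  rw [ae_restrict_iff' hSN] at hzero
  filter_upwards [hzero, hf.ae_differentiableAt, hg.ae_differentiableAt] with x hx hfx hgx hxS
  simpa [he, sub_eq_zero] using hx ⟨hxS, hfx, hgx⟩

/-- `g` is a truncation of `f` at gradient level `Λ`: it agrees with `f` on `Z` and on `B` outside
the bad set `W`, and on `B` its gradient is controlled by that of `f`, by `Λ`, and on `W` only
by `Λ`. -/
structure IsTruncation (μ : Measure E) (f : E → ℝ) (B W Z : Set E) (Λ : ℝ) (g : E → ℝ) :
    Prop where
  lipschitz : ∃ L, LipschitzWith L g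
  nonneg : ∀ x, 0 ≤ g x
  eqOn : EqOn g f (B \ W ∪ Z)
  norm_fderiv_le : ∀ᵐ x ∂μ, x ∈ B →
    ‖fderiv ℝ g x‖ ≤ W.indicator (fun _ => Λ) x + min ‖fderiv ℝ f x‖ Λ

lemma exists_isTruncation {f : E → ℝ} {K : NNReal} (hf : LipschitzWith K f) (hf0 : ∀ x, 0 ≤ f x)
    {B W Z : Set E} (hB : MeasurableSet B) (hW : MeasurableSet W) {Λ : ℝ} (hΛ : 0 ≤ Λ)
    (hfS : ∀ x ∈ B \ W ∪ Z, ∀ y ∈ B \ W ∪ Z, |f x - f y| ≤ Λ * dist x y) :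
    ∃ g, IsTruncation μ f B W Z Λ g := by
  have hlip : LipschitzOnWith Λ.toNNReal f (B \ W ∪ Z) := .of_dist_le_mul fun x hx y hy => by
    rw [Real.coe_toNNReal _ hΛ]
    exact hfS x hx y hy
  obtain ⟨g, hg, hgf⟩ := hlip.extend_real
  have hg' : LipschitzWith Λ.toNNReal fun x => max (g x) 0 := hg.max_const 0
  have heq : EqOn (fun x => max (g x) 0) f (B \ W ∪ Z) := fun x hx => by
    simp only [← hgf hx, max_eq_left (hf0 x)]
  refine ⟨fun x => max (g x) 0, ⟨_, hg'⟩, fun x => le_max_right _ _, heq, ?_⟩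
  filter_upwards [ae_fderiv_eq_of_eqOn hg' hf (hB.diff hW) (heq.mono subset_union_left)]
    with x hx hxB
  have hle := norm_fderiv_le_of_lipschitz ℝ (x₀ := x) hg'
  rw [Real.coe_toNNReal _ hΛ] at hle
  by_cases hxW : x ∈ W
  · rw [indicator_of_mem hxW]
    exact hle.trans (le_add_of_nonneg_right (le_min (norm_nonneg _) hΛ))
  · rw [indicator_of_notMem hxW, zero_add, ← hx ⟨hxB, hxW⟩]
    exact le_min le_rfl hle

end Truncation

/-- The average of `g_k, …, g_{2k-1}`. -/
def blockAverage {E : Type*} (k : ℕ) (g : ℕ → E → ℝ) (x : E) : ℝ :=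
  (k : ℝ)⁻¹ * ∑ j ∈ Finset.Ico k (2 * k), g j x

section BlockAverage

lemma card_Ico_two_mul (k : ℕ) : (Finset.Ico k (2 * k)).card = k := by
  rw [Nat.card_Ico, two_mul, Nat.add_sub_cancel]

lemma blockAverage_nonneg {E : Type*} {k : ℕ} {g : ℕ → E → ℝ} {x : E}
    (h : ∀ j ∈ Finset.Ico k (2 * k), 0 ≤ g j x) : 0 ≤ blockAverage k g x :=
  mul_nonneg (by positivity) (Finset.sum_nonneg h)

lemma blockAverage_eq_of_forall_eq {E : Type*} {k : ℕ} (hk : 0 < k) {g : ℕ → E → ℝ} {x : E}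
    {c : ℝ} (h : ∀ j ∈ Finset.Ico k (2 * k), g j x = c) : blockAverage k g x = c := by
  have hk' : (k : ℝ) ≠ 0 := by positivity
  rw [blockAverage, Finset.sum_congr rfl h, Finset.sum_const, card_Ico_two_mul, nsmul_eq_mul,
    inv_mul_cancel_left₀ hk']

lemma exists_lipschitzWith_sum {E ι : Type*} [PseudoMetricSpace E] (J : Finset ι)
    {g : ι → E → ℝ} (h : ∀ j ∈ J, ∃ L, LipschitzWith L (g j)) :
    ∃ L, LipschitzWith L fun x => ∑ j ∈ J, g j x := by
  classical
  induction J using Finset.induction_on with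
  | empty => exact ⟨0, by simp⟩
  | insert j J hj ih =>
    obtain ⟨L, hL⟩ := ih fun i hi => h i (Finset.mem_insert_of_mem hi)
    obtain ⟨M, hM⟩ := h j (Finset.mem_insert_self _ _)
    simp only [Finset.sum_insert hj]
    exact ⟨M + L, hM.add hL⟩

lemma exists_lipschitzWith_blockAverage {E : Type*} [PseudoMetricSpace E] {k : ℕ}
    {g : ℕ → E → ℝ} (h : ∀ j ∈ Finset.Ico k (2 * k), ∃ L, LipschitzWith L (g j)) :
    ∃ L, LipschitzWith L (blockAverage k g) := by
  obtain ⟨L, hL⟩ := exists_lipschitzWith_sum _ h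
  exact ⟨_, (lipschitzWith_smul (k : ℝ)⁻¹).comp hL⟩

lemma ae_norm_fderiv_blockAverage_le {E : Type*} [NormedAddCommGroup E] [NormedSpace ℝ E]
    [FiniteDimensional ℝ E] [MeasurableSpace E] [BorelSpace E] {μ : Measure E}
    [μ.IsAddHaarMeasure] {k : ℕ} {g : ℕ → E → ℝ}
    (h : ∀ j ∈ Finset.Ico k (2 * k), ∃ L, LipschitzWith L (g j)) :
    ∀ᵐ x ∂μ, ‖fderiv ℝ (blockAverage k g) x‖
      ≤ (k : ℝ)⁻¹ * ∑ j ∈ Finset.Ico k (2 * k), ‖fderiv ℝ (g j) x‖ := by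
  have hd : ∀ᵐ x ∂μ, ∀ j ∈ Finset.Ico k (2 * k), DifferentiableAt ℝ (g j) x := by
    rw [Filter.eventually_all_finset]
    intro j hj
    obtain ⟨L, hL⟩ := h j hj
    exact hL.ae_differentiableAt
  filter_upwards [hd] with x hx
  have hD : HasFDerivAt (blockAverage k g) _ x :=
    (HasFDerivAt.fun_sum fun j hj => (hx j hj).hasFDerivAt).const_mul (k : ℝ)⁻¹
  rw [hD.fderiv, norm_smul, Real.norm_of_nonneg (by positivity)]
  gcongr
  exact norm_sum_le _ _

end BlockAverage

/-! ### Energy of the cutoff -/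

/-- A cutoff which is supported in `ball z ρ` and in `{h < 2 θ}`, and which is at least `1` on the
zero set of `h` in `ball z (ρ / 2)`. -/
def coneCutoff {E : Type*} [PseudoMetricSpace E] (z : E) (ρ θ : ℝ) (h : E → ℝ) (x : E) : ℝ :=
  max (2 - 2 / ρ * dist x z - h x / θ) 0

section ConeCutoff

lemma one_le_coneCutoff {E : Type*} [PseudoMetricSpace E] {z x : E} {ρ θ : ℝ} {h : E → ℝ}
    (hρ : 0 < ρ) (hx : dist x z ≤ ρ / 2) (hh : h x = 0) : 1 ≤ coneCutoff z ρ θ h x := by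
  have hcone : 2 / ρ * dist x z ≤ 1 := by
    rw [div_mul_eq_mul_div, div_le_one hρ]
    linarith
  refine le_trans ?_ (le_max_left _ _)
  rw [hh, zero_div]
  linarith

lemma coneCutoff_eq_zero {E : Type*} [PseudoMetricSpace E] {z x : E} {ρ θ : ℝ} {h : E → ℝ}
    (hρ : 0 < ρ) (hθ : 0 ≤ θ) (hx : x ∉ ball z ρ) (hh : 0 ≤ h x) : coneCutoff z ρ θ h x = 0 := by
  have hcone : 2 ≤ 2 / ρ * dist x z := by
    rw [div_mul_eq_mul_div, le_div_iff₀ hρ]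
    gcongr
    simpa using hx
  refine max_eq_right ?_
  linarith [div_nonneg hh hθ]

lemma exists_lipschitzWith_coneCutoff {E : Type*} [PseudoMetricSpace E] {h : E → ℝ} {K : NNReal}
    (hh : LipschitzWith K h) (z : E) (ρ θ : ℝ) : ∃ L, LipschitzWith L (coneCutoff z ρ θ h) := by
  have hcone : LipschitzWith (‖2 / ρ‖₊ * 1) fun x : E => 2 / ρ * dist x z :=
    (lipschitzWith_smul (2 / ρ)).comp (LipschitzWith.dist_left z)
  have hscaled : LipschitzWith (‖θ⁻¹‖₊ * K) fun x : E => h x / θ := by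
    simp only [div_eq_inv_mul]
    exact (lipschitzWith_smul θ⁻¹).comp hh
  exact ⟨_, (((LipschitzWith.const (2 : ℝ)).sub hcone).sub hscaled).max_const 0⟩

variable {E : Type*} [NormedAddCommGroup E] [NormedSpace ℝ E]

lemma fderiv_coneCutoff_eq_zero {h : E → ℝ} {z x : E} {ρ θ : ℝ}
    (hx : 2 - 2 / ρ * dist x z - h x / θ ≤ 0) : fderiv ℝ (coneCutoff z ρ θ h) x = 0 := by
  have hmin : IsLocalMin (coneCutoff z ρ θ h) x :=
    .of_forall fun y => (max_eq_right hx).trans_le (le_max_right _ _)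
  exact hmin.fderiv_eq_zero

lemma norm_fderiv_coneCutoff_le {h : E → ℝ} {z x : E} {ρ θ : ℝ} (hρ : 0 < ρ) (hθ : 0 < θ)
    (hd : DifferentiableAt ℝ (fun y => dist y z) x) (hh : DifferentiableAt ℝ h x)
    (hx : 0 < 2 - 2 / ρ * dist x z - h x / θ) :
    ‖fderiv ℝ (coneCutoff z ρ θ h) x‖ ≤ 2 / ρ + ‖fderiv ℝ h x‖ / θ := by
  have hD := ((hd.hasFDerivAt.const_mul (2 / ρ)).const_sub 2).sub (hh.hasFDerivAt.const_mul θ⁻¹)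
  have heq : coneCutoff z ρ θ h =ᶠ[nhds x]
      (fun y => 2 - 2 / ρ * dist y z) - fun y => θ⁻¹ * h y := by
    have hcont := hD.continuousAt.eventually (lt_mem_nhds (a := 0) (by
      simpa [div_eq_inv_mul] using hx))
    filter_upwards [hcont] with y hy
    rw [coneCutoff, div_eq_inv_mul (h y)]
    exact max_eq_left hy.le
  have hdist : ‖fderiv ℝ (fun y => dist y z) x‖ ≤ 1 :=
    norm_fderiv_le_of_lipschitz ℝ (LipschitzWith.dist_left z)
  rw [heq.fderiv_eq, hD.fderiv]
  refine (norm_sub_le _ _).trans ?_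
  rw [norm_neg, norm_smul, norm_smul, Real.norm_of_nonneg (by positivity),
    Real.norm_of_nonneg (by positivity), div_eq_inv_mul ‖fderiv ℝ h x‖]
  gcongr
  exact mul_le_of_le_one_right (by positivity) hdist

lemma ae_norm_fderiv_coneCutoff_le [FiniteDimensional ℝ E] [MeasurableSpace E] [BorelSpace E]
    {μ : Measure E} [μ.IsAddHaarMeasure] {h : E → ℝ} {K : NNReal} (hh : LipschitzWith K h) (z : E)
    {ρ θ : ℝ} (hρ : 0 < ρ) (hθ : 0 < θ) :
    ∀ᵐ x ∂μ, ‖fderiv ℝ (coneCutoff z ρ θ h) x‖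
      ≤ {x | h x < 2 * θ}.indicator (fun x => 2 / ρ + ‖fderiv ℝ h x‖ / θ) x := by
  filter_upwards [hh.ae_differentiableAt, (LipschitzWith.dist_left z).ae_differentiableAt]
    with x hhx hdx
  rcases le_or_gt (2 - 2 / ρ * dist x z - h x / θ) 0 with h0 | h0
  · rw [fderiv_coneCutoff_eq_zero h0, norm_zero]
    exact indicator_nonneg (fun x _ => by positivity) x
  · have hcone : 0 ≤ 2 / ρ * dist x z := by positivity
    have hlt : h x < 2 * θ := (div_lt_iff₀ hθ).1 (by linarith)
    rw [indicator_of_mem (s := {x | h x < 2 * θ}) hlt]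
    exact norm_fderiv_coneCutoff_le hρ hθ hdx hhx h0

end ConeCutoff

section CutoffEnergy

lemma add_add_rpow_le {a b c p : ℝ} (ha : 0 ≤ a) (hb : 0 ≤ b) (hc : 0 ≤ c) (hp : 1 ≤ p) :
    (a + b + c) ^ p ≤ 3 ^ p * (a ^ p + b ^ p + c ^ p) := by
  have h := Real.rpow_sum_le_const_mul_sum_rpow_of_nonneg (s := Finset.univ) (f := ![a, b, c]) hp
    fun i _ => by fin_cases i <;> assumption
  simp only [Fin.sum_univ_three, Finset.card_univ, Fintype.card_fin, Matrix.cons_val] at h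
  refine h.trans ?_
  gcongr
  norm_num

lemma sum_two_pow_rpow_le (s : Finset ℕ) {p : ℝ} (hp : 0 < p) :
    (∑ j ∈ s, (2 : ℝ) ^ j) ^ p ≤ 2 ^ p * ∑ j ∈ s, ((2 : ℝ) ^ p) ^ j := by
  rcases s.eq_empty_or_nonempty with rfl | hs
  · simp [Real.zero_rpow hp.ne']
  · set N := s.max' hs
    have hsum : ∑ j ∈ s, (2 : ℝ) ^ j ≤ 2 * 2 ^ N := by
      rw [← pow_succ']
      exact_mod_cast (Nat.geomSum_lt le_rfl fun k hk => Nat.lt_succ_of_le (s.le_max' k hk)).le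
    calc (∑ j ∈ s, (2 : ℝ) ^ j) ^ p ≤ (2 * 2 ^ N) ^ p := by gcongr
      _ = 2 ^ p * ((2 : ℝ) ^ p) ^ N := by
          rw [Real.mul_rpow two_pos.le (by positivity), Real.rpow_pow_comm two_pos.le]
      _ ≤ _ := by
          gcongr
          exact Finset.single_le_sum (f := fun j => ((2 : ℝ) ^ p) ^ j)
            (fun j _ => by positivity) (s.max'_mem hs)

lemma min_rpow_le {G M p : ℝ} (hG : 0 ≤ G) (hM : 0 ≤ M) (hp : 1 ≤ p) :
    (min G M) ^ p ≤ M ^ (p - 1) * G := by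
  have h0 : 0 ≤ min G M := le_min hG hM
  calc (min G M) ^ p = (min G M) ^ (p - 1) * min G M := by
        rw [← Real.rpow_add_one' h0 (by linarith), sub_add_cancel]
    _ ≤ M ^ (p - 1) * G := by
        gcongr
        · exact min_le_right _ _
        · exact min_le_left _ _

lemma two_add_sum_two_pow_add_min_rpow_le {p a G M : ℝ} (hp : 1 ≤ p) (ha : 0 ≤ a) (hG : 0 ≤ G)
    (hM : 0 ≤ M) (s : Finset ℕ) :
    (2 + a * ∑ j ∈ s, (2 : ℝ) ^ j + min G M) ^ p
      ≤ 3 ^ p * (2 ^ p + (2 * a) ^ p * ∑ j ∈ s, ((2 : ℝ) ^ p) ^ j + M ^ (p - 1) * G) := by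
  have hT : 0 ≤ ∑ j ∈ s, (2 : ℝ) ^ j := Finset.sum_nonneg fun _ _ => by positivity
  calc (2 + a * ∑ j ∈ s, (2 : ℝ) ^ j + min G M) ^ p
      ≤ 3 ^ p * (2 ^ p + (a * ∑ j ∈ s, (2 : ℝ) ^ j) ^ p + min G M ^ p) :=
        add_add_rpow_le zero_le_two (by positivity) (le_min hG hM) hp
    _ ≤ 3 ^ p * (2 ^ p + a ^ p * (2 ^ p * ∑ j ∈ s, ((2 : ℝ) ^ p) ^ j) + M ^ (p - 1) * G) := by
        rw [Real.mul_rpow ha hT]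
        gcongr
        · exact sum_two_pow_rpow_le s (by linarith)
        · exact min_rpow_le hG hM hp
    _ = _ := by
        rw [Real.mul_rpow zero_le_two ha]
        ring

lemma inv_mul_sum_add_min_le {k : ℕ} (hk : 0 < k) {Λ G : ℝ} (hΛ : 0 ≤ Λ) (T : ℕ → ℝ) :
    (k : ℝ)⁻¹ * ∑ j ∈ Finset.Ico k (2 * k), (T j + min G (Λ * 2 ^ j))
      ≤ (k : ℝ)⁻¹ * (∑ j ∈ Finset.Ico k (2 * k), T j) + min G (Λ * 4 ^ k) := by
  have hk' : (k : ℝ) ≠ 0 := by positivity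
  have hmin : ∑ j ∈ Finset.Ico k (2 * k), min G (Λ * 2 ^ j) ≤ k * min G (Λ * 4 ^ k) := by
    have h := Finset.sum_le_card_nsmul (Finset.Ico k (2 * k)) (fun j => min G (Λ * 2 ^ j))
      (min G (Λ * 4 ^ k)) fun j hj => by
        have hj : (2 : ℝ) ^ j ≤ 4 ^ k := by
          rw [show (4 : ℝ) = 2 ^ 2 by norm_num, ← pow_mul]
          exact pow_le_pow_right₀ one_le_two (Finset.mem_Ico.1 hj).2.le
        gcongr
    rwa [card_Ico_two_mul, nsmul_eq_mul] at h
  calc (k : ℝ)⁻¹ * ∑ j ∈ Finset.Ico k (2 * k), (T j + min G (Λ * 2 ^ j))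
      ≤ (k : ℝ)⁻¹ * (∑ j ∈ Finset.Ico k (2 * k), T j + k * min G (Λ * 4 ^ k)) := by
        rw [Finset.sum_add_distrib]
        gcongr
    _ = _ := by rw [mul_add, inv_mul_cancel_left₀ hk']

lemma mul_two_div_add_div_le {ρ lam C k T G D M : ℝ} (hρ : 0 < ρ) (hlam : 0 < lam)
    (hD : D ≤ k⁻¹ * (C * lam * T) + min G (C * lam * M)) :
    ρ * (2 / ρ + D / (lam * ρ / 4)) ≤ 2 + 4 * C / k * T + min (4 / lam * G) (4 * C * M) := by
  calc ρ * (2 / ρ + D / (lam * ρ / 4)) = 2 + 4 / lam * D := by field_simp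
    _ ≤ 2 + 4 / lam * (k⁻¹ * (C * lam * T) + min G (C * lam * M)) := by gcongr
    _ = _ := by
        rw [mul_add, mul_min_of_nonneg _ _ (by positivity), ← add_assoc]
        congr 2 <;> field_simp

lemma sum_indicator_const_eq_sum_filter {E : Type*} (J : Finset ℕ) (W : ℕ → Set E) (b : ℕ → ℝ)
    (x : E) [DecidablePred fun j => x ∈ W j] :
    ∑ j ∈ J, (W j).indicator (fun _ => b j) x = ∑ j ∈ J with x ∈ W j, b j := by
  simp only [Finset.sum_filter, indicator_apply]

variable {E : Type*} [NormedAddCommGroup E] [NormedSpace ℝ E] [FiniteDimensional ℝ E]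
  [MeasurableSpace E] [BorelSpace E] {μ : Measure E} [μ.IsAddHaarMeasure]
  {f : E → ℝ} {g : ℕ → E → ℝ} {W : ℕ → Set E} {Z : Set E} {z : E} {p ρ lam C : ℝ} {k : ℕ}

lemma ae_norm_fderiv_blockAverage_le_of_isTruncation {B : Set E} {Λ : ℝ} (hk : 0 < k)
    (hΛ : 0 ≤ Λ)
    (hg : ∀ j ∈ Finset.Ico k (2 * k), IsTruncation μ f B (W j) Z (Λ * 2 ^ j) (g j)) :
    ∀ᵐ x ∂μ, x ∈ B → ‖fderiv ℝ (blockAverage k g) x‖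
      ≤ (k : ℝ)⁻¹ * ∑ j ∈ Finset.Ico k (2 * k), (W j).indicator (fun _ => Λ * 2 ^ j) x
        + min ‖fderiv ℝ f x‖ (Λ * 4 ^ k) := by
  have hgrad := (Filter.eventually_all_finset _).2 fun j hj => (hg j hj).norm_fderiv_le
  filter_upwards [ae_norm_fderiv_blockAverage_le fun j hj => (hg j hj).lipschitz, hgrad]
    with x hx hxj hxB
  refine (hx.trans ?_).trans (inv_mul_sum_add_min_le hk hΛ _)
  gcongr with j hj
  exact hxj j hj hxB

lemma ae_rpow_norm_fderiv_coneCutoff_le (hp : 1 ≤ p) (hρ : 0 < ρ) (hlam : 0 < lam) (hC : 0 ≤ C)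
    (hk : 0 < k)
    (hg : ∀ j ∈ Finset.Ico k (2 * k),
      IsTruncation μ f (ball z ρ) (W j) Z (C * lam * 2 ^ j) (g j)) :
    ∀ᵐ x ∂μ.restrict (ball z ρ),
      ρ ^ p * ‖fderiv ℝ (coneCutoff z ρ (lam * ρ / 4) (blockAverage k g)) x‖ ^ p
        ≤ 3 ^ p * (2 ^ p * {x | blockAverage k g x < lam * ρ / 2}.indicator 1 x
          + (8 * C / k) ^ p * (∑ j ∈ Finset.Ico k (2 * k), ((2 : ℝ) ^ p) ^ j *
            (W j).indicator 1 x)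
          + (4 * C * 4 ^ k) ^ (p - 1) * (4 / lam) * ‖fderiv ℝ f x‖) := by
  classical
  obtain ⟨L, hL⟩ := exists_lipschitzWith_blockAverage fun j hj => (hg j hj).lipschitz
  rw [ae_restrict_iff' measurableSet_ball]
  filter_upwards [ae_norm_fderiv_coneCutoff_le hL z hρ (θ := lam * ρ / 4) (by positivity),
    ae_norm_fderiv_blockAverage_le_of_isTruncation hk (by positivity) hg] with x hcut havg hxB
  rw [show 2 * (lam * ρ / 4) = lam * ρ / 2 by ring] at hcut
  have hsum : ∑ j ∈ Finset.Ico k (2 * k), ((2 : ℝ) ^ p) ^ j * (W j).indicator 1 x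
      = ∑ j ∈ Finset.Ico k (2 * k) with x ∈ W j, ((2 : ℝ) ^ p) ^ j := by
    simp [Finset.sum_filter, indicator_apply]
  have hsum0 : 0 ≤ ∑ j ∈ Finset.Ico k (2 * k) with x ∈ W j, ((2 : ℝ) ^ p) ^ j :=
    Finset.sum_nonneg fun _ _ => by positivity
  rw [← Real.mul_rpow hρ.le (norm_nonneg _), hsum]
  by_cases hx : x ∈ {x | blockAverage k g x < lam * ρ / 2}
  · rw [indicator_of_mem hx] at hcut ⊢
    rw [Pi.one_apply, mul_one, mul_assoc _ (4 / lam)]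
    rw [sum_indicator_const_eq_sum_filter, ← Finset.mul_sum] at havg
    have hbound := (mul_le_mul_of_nonneg_left hcut hρ.le).trans
      (mul_two_div_add_div_le hρ hlam (havg hxB))
    refine (Real.rpow_le_rpow (by positivity) hbound (by linarith)).trans ?_
    have h := two_add_sum_two_pow_add_min_rpow_le hp (a := 4 * C / k) (by positivity)
      (by positivity : 0 ≤ 4 / lam * ‖fderiv ℝ f x‖) (by positivity : 0 ≤ 4 * C * 4 ^ k)
      {j ∈ Finset.Ico k (2 * k) | x ∈ W j}
    rwa [show 2 * (4 * C / k) = 8 * C / k by ring] at h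
  · rw [indicator_of_notMem hx] at hcut ⊢
    rw [le_antisymm hcut (norm_nonneg _), mul_zero, Real.zero_rpow (by linarith)]
    positivity

lemma integrableOn_ball_norm_fderiv_rpow {u : E → ℝ} {K : NNReal} (hu : LipschitzWith K u)
    (hp : 0 ≤ p) (z : E) (ρ : ℝ) : IntegrableOn (fun x => ‖fderiv ℝ u x‖ ^ p) (ball z ρ) μ := by
  refine Measure.integrableOn_of_bounded (M := (K : ℝ) ^ p) measure_ball_lt_top.ne
    ((measurable_fderiv ℝ u).norm.pow_const p).aestronglyMeasurable (.of_forall fun x => ?_)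
  rw [Real.norm_of_nonneg (by positivity)]
  gcongr
  exact norm_fderiv_le_of_lipschitz ℝ hu

lemma setIntegral_indicator_one {X : Type*} [MeasurableSpace X] {μ : Measure X} {S : Set X}
    (hS : MeasurableSet S) (B : Set X) : ∫ x in B, S.indicator 1 x ∂μ = μ.real (S ∩ B) := by
  rw [integral_indicator_one hS, measureReal_restrict_apply hS]

lemma integral_rpow_norm_fderiv_coneCutoff_le (hp : 1 ≤ p) (hρ : 0 < ρ) (hlam : 0 < lam)
    (hC : 0 ≤ C) (hk : 0 < k) {K : NNReal} (hf : LipschitzWith K f)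
    (hW : ∀ j, MeasurableSet (W j))
    (hg : ∀ j ∈ Finset.Ico k (2 * k),
      IsTruncation μ f (ball z ρ) (W j) Z (C * lam * 2 ^ j) (g j)) :
    ρ ^ p * ∫ x in ball z ρ,
        ‖fderiv ℝ (coneCutoff z ρ (lam * ρ / 4) (blockAverage k g)) x‖ ^ p ∂μ
      ≤ 3 ^ p * (2 ^ p * μ.real ({x | blockAverage k g x < lam * ρ / 2} ∩ ball z ρ)
        + (8 * C / k) ^ p * (∑ j ∈ Finset.Ico k (2 * k), ((2 : ℝ) ^ p) ^ j *
          μ.real (W j ∩ ball z ρ))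
        + (4 * C * 4 ^ k) ^ (p - 1) * (4 / lam) * ∫ x in ball z ρ, ‖fderiv ℝ f x‖ ∂μ) := by
  obtain ⟨L, hL⟩ := exists_lipschitzWith_blockAverage fun j hj => (hg j hj).lipschitz
  obtain ⟨M, hM⟩ := exists_lipschitzWith_coneCutoff hL z ρ (lam * ρ / 4)
  set H : Set E := {x | blockAverage k g x < lam * ρ / 2}
  have hH : MeasurableSet H := (isOpen_lt hL.continuous continuous_const).measurableSet
  have hind : ∀ {S : Set E}, MeasurableSet S →
      IntegrableOn (S.indicator (1 : E → ℝ)) (ball z ρ) μ := fun hS =>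
    (integrableOn_const measure_ball_lt_top.ne).integrable.indicator hS
  have hi₁ := (hind hH).integrable.const_mul (2 ^ p)
  have hi₂ := (integrable_finsetSum (Finset.Ico k (2 * k)) fun j _ =>
    (hind (hW j)).integrable.const_mul (((2 : ℝ) ^ p) ^ j)).const_mul ((8 * C / k) ^ p)
  have hi₃ := (integrableOn_ball_norm_fderiv (μ := μ) hf z ρ).integrable.const_mul
    ((4 * C * 4 ^ k) ^ (p - 1) * (4 / lam))
  have hle := integral_mono_ae
    ((integrableOn_ball_norm_fderiv_rpow hM (by linarith) z ρ).integrable.const_mul (ρ ^ p))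
    (((hi₁.add hi₂).add hi₃).const_mul (3 ^ p))
    (ae_rpow_norm_fderiv_coneCutoff_le hp hρ hlam hC hk hg)
  rw [integral_const_mul, integral_const_mul, integral_add' (hi₁.add hi₂) hi₃,
    integral_add' hi₁ hi₂, integral_const_mul, integral_const_mul, integral_const_mul,
    integral_finsetSum _ fun j _ => (hind (hW j)).integrable.const_mul _] at hle
  simpa only [integral_const_mul, setIntegral_indicator_one, hH, hW] using hle

end CutoffEnergy

/-! ### A good-`λ` inequality from fatness -/

lemma measureReal_sublevel_blockAverage_le {X : Type*} [MeasurableSpace X] {μ : Measure X}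
    {k : ℕ} (hk : 0 < k) {f : X → ℝ} {g : ℕ → X → ℝ} {B : Set X} (hB : μ B ≠ ⊤) {W : ℕ → Set X}
    {s : ℝ}
    (hg : ∀ j ∈ Finset.Ico k (2 * k), EqOn (g j) f (B \ W j)) :
    μ.real ({x | blockAverage k g x < s} ∩ B) ≤ μ.real ({x | f x < s} ∩ B)
      + ∑ j ∈ Finset.Ico k (2 * k), μ.real (W j ∩ B) := by
  have hsub : {x | blockAverage k g x < s} ∩ B ⊆
      ({x | f x < s} ∩ B) ∪ ⋃ j ∈ Finset.Ico k (2 * k), W j ∩ B := by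
    rintro x ⟨hx, hxB⟩
    by_cases! hxW : ∃ j ∈ Finset.Ico k (2 * k), x ∈ W j
    · obtain ⟨j, hj, hxj⟩ := hxW
      exact .inr (mem_biUnion hj ⟨hxj, hxB⟩)
    · have heq : blockAverage k g x = f x :=
        blockAverage_eq_of_forall_eq hk fun j hj => hg j hj ⟨hxB, hxW j hj⟩
      exact .inl ⟨(heq ▸ hx : f x < s), hxB⟩
  have hfin : μ (({x | f x < s} ∩ B) ∪ ⋃ j ∈ Finset.Ico k (2 * k), W j ∩ B) ≠ ⊤ :=
    ((measure_mono (union_subset inter_subset_right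
      (iUnion₂_subset fun j _ => inter_subset_right))).trans_lt hB.lt_top).ne
  refine (measureReal_mono hsub hfin).trans ((measureReal_union_le _ _).trans ?_)
  gcongr
  exact measureReal_biUnion_finset_le _ _

lemma sum_Ico_le_rpow_neg_mul_sum {k : ℕ} (hk : 0 < k) {p : ℝ} (hp : 0 ≤ p) {m : ℕ → ℝ}
    (hm : ∀ j, 0 ≤ m j) :
    ∑ j ∈ Finset.Ico k (2 * k), m j
      ≤ (k : ℝ) ^ (-p) * ∑ j ∈ Finset.Ico k (2 * k), ((2 : ℝ) ^ p) ^ j * m j := by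
  have hkR : (0 : ℝ) < k := Nat.cast_pos.2 hk
  rw [Real.rpow_neg hkR.le, ← div_eq_inv_mul, le_div_iff₀' (by positivity), Finset.mul_sum]
  refine Finset.sum_le_sum fun j hj => mul_le_mul_of_nonneg_right ?_ (hm j)
  rw [Real.rpow_pow_comm two_pos.le]
  refine Real.rpow_le_rpow hkR.le ?_ hp
  exact_mod_cast (Finset.mem_Ico.1 hj).1.trans Nat.lt_two_pow_self.le

section GoodLambda

variable {E : Type*} [NormedAddCommGroup E]

/-- Lipschitz functions with values in `[0, 1]` vanishing on `F ∩ closedBall 0 (1 / 2)`: the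
functions `1 - v`, where `v` runs through the normalized test functions for the capacity of that
set. -/
structure IsCotest (F : Set E) (f : E → ℝ) : Prop where
  lipschitz : ∃ K, LipschitzWith K f
  nonneg : ∀ x, 0 ≤ f x
  le_one : ∀ x, f x ≤ 1
  eq_zero : ∀ x ∈ F ∩ closedBall 0 (1 / 2), f x = 0

lemma IsCotest.eq_zero_of_mem_ball {F : Set E} {f : E → ℝ} (hf : IsCotest F f) {x z : E} {ρ : ℝ}
    (hx : x ∈ F ∩ ball z ρ) (hz : ‖z‖ + ρ ≤ 1 / 2) : f x = 0 :=
  hf.eq_zero x ⟨hx.1, mem_closedBall_zero_iff.2 ((norm_lt_of_mem_ball hx.2).le.trans hz)⟩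

/-- Superlevel set at height `t` of the Hardy-type maximal function `ρ⁻¹ ⨍ f` over balls of radius
`ρ` centred on `F`. The centres keep the distance `4 / t` from the boundary of `ball 0 (1 / 2)`,
which leaves room for the relevant balls at all higher levels. -/
def hardySet [MeasurableSpace E] (μ : Measure E) (F : Set E) (f : E → ℝ) (t : ℝ) : Set E :=
  {x | ∃ z ∈ F, ‖z‖ < 1 / 2 - 4 / t ∧ ∃ ρ, 0 < ρ ∧ x ∈ ball z ρ ∧
    t * ρ * μ.real (ball z ρ) < ∫ w in ball z ρ, f w ∂μ}

lemma isOpen_hardySet [MeasurableSpace E] (μ : Measure E) (F : Set E) (f : E → ℝ) (t : ℝ) :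
    IsOpen (hardySet μ F f t) := by
  refine isOpen_iff_forall_mem_open.2 ?_
  rintro x ⟨z, hz, hz1, ρ, hρ, hx, h⟩
  exact ⟨ball z ρ, fun w hw => ⟨z, hz, hz1, ρ, hρ, hw, h⟩, isOpen_ball, hx⟩

variable [NormedSpace ℝ E]

/-- The Lipschitz constant of `f` off `badSet μ F f t` is at most `lipFactor E * t`. -/
def lipFactor (E : Type*) [NormedAddCommGroup E] [NormedSpace ℝ E] : ℝ :=
  6 * 4 ^ (finrank ℝ E + 1) + 2

lemma lipFactor_pos : 0 < lipFactor E := by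
  rw [lipFactor]
  positivity

/-- The constant in front of the gain `k ^ (-p)` in the good-`λ` inequality. -/
def gainConst (E : Type*) [NormedAddCommGroup E] [NormedSpace ℝ E] (p c : ℝ) : ℝ :=
  2 / c * (3 ^ p * (2 ^ p + (8 * lipFactor E) ^ p))

lemma gainConst_pos (p : ℝ) {c : ℝ} (hc : 0 < c) : 0 < gainConst E p c := by
  have := lipFactor_pos (E := E)
  rw [gainConst]
  positivity

/-- The size of the gradient, relative to the level, below which fatness absorbs its contribution
to the energy of the cutoff. -/
def smallGradient (E : Type*) [NormedAddCommGroup E] [NormedSpace ℝ E] (p c : ℝ) (k : ℕ) : ℝ :=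
  min 1 (c / 2 /
    (3 ^ p * (2 ^ p * 2 ^ (finrank ℝ E + 2) + (4 * lipFactor E * 4 ^ k) ^ (p - 1) * 4)))

lemma smallGradient_pos (p : ℝ) {c : ℝ} (hc : 0 < c) (k : ℕ) : 0 < smallGradient E p c k := by
  have := lipFactor_pos (E := E)
  exact lt_min one_pos (by positivity)

lemma mul_smallGradient_le (p c : ℝ) (k : ℕ) :
    3 ^ p * (2 ^ p * 2 ^ (finrank ℝ E + 2) + (4 * lipFactor E * 4 ^ k) ^ (p - 1) * 4)
      * smallGradient E p c k ≤ c / 2 := by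
  have := lipFactor_pos (E := E)
  rw [← le_div_iff₀' (by positivity)]
  exact min_le_right _ _

variable [MeasurableSpace E]

/-- Uniform `p`-fatness of `F` at scales below `1`: a lower bound `c` for the scaled `p`-capacity of
`F ∩ closedBall z (ρ / 2)` in `ball z ρ`, tested with Lipschitz functions on the whole space. -/
def IsUniformlyFat (μ : Measure E) (F : Set E) (p c : ℝ) : Prop :=
  ∀ z ∈ F, ∀ ρ, 0 < ρ → ρ < 1 → ∀ v : E → ℝ, (∃ K, LipschitzWith K v) →
    (∀ x ∈ F ∩ closedBall z (ρ / 2), 1 ≤ v x) → (∀ x ∉ ball z ρ, v x = 0) →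
    c * μ.real (ball z ρ) ≤ ρ ^ p * ∫ x in ball z ρ, ‖fderiv ℝ v x‖ ^ p ∂μ

/-- The set off which `f` is Lipschitz with a constant of order `t`. -/
def badSet (μ : Measure E) (F : Set E) (f : E → ℝ) (t : ℝ) : Set E :=
  maximalSet μ (fun w => ‖fderiv ℝ f w‖) t ∪ hardySet μ F f t

lemma isOpen_badSet (μ : Measure E) (F : Set E) (f : E → ℝ) (t : ℝ) : IsOpen (badSet μ F f t) :=
  (isOpen_maximalSet μ _ t).union (isOpen_hardySet μ F f t)

lemma mul_measureReal_ball_le_integral_coneCutoff {μ : Measure E} {F : Set E}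
    {p c θ ρ : ℝ} {z : E} (hF : IsUniformlyFat μ F p c)
    (hz : z ∈ F) (hρ : 0 < ρ) (hρ1 : ρ < 1) (hθ : 0 ≤ θ) {K : NNReal} {h : E → ℝ}
    (hh : LipschitzWith K h) (hh0 : ∀ x, 0 ≤ h x) (hhF : ∀ x ∈ F ∩ ball z ρ, h x = 0) :
    c * μ.real (ball z ρ) ≤ ρ ^ p * ∫ x in ball z ρ, ‖fderiv ℝ (coneCutoff z ρ θ h) x‖ ^ p ∂μ := by
  refine hF z hz ρ hρ hρ1 _ (exists_lipschitzWith_coneCutoff hh z ρ θ) (fun x hx => ?_)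
    fun x hx => coneCutoff_eq_zero hρ hθ hx (hh0 x)
  have hxz : dist x z ≤ ρ / 2 := hx.2
  exact one_le_coneCutoff hρ hxz (hhF x ⟨hx.1, mem_ball.2 (by linarith)⟩)

variable [FiniteDimensional ℝ E] [BorelSpace E] {μ : Measure E} [μ.IsAddHaarMeasure]
  {F : Set E} {f : E → ℝ} {K : NNReal} {z : E} {ρ lam : ℝ}

lemma radius_lt_one_div_of_lt_setIntegral (hf : Continuous f) (hf1 : ∀ x, f x ≤ 1) (hρ : 0 < ρ)
    (hlam : 0 < lam) (h : lam * ρ * μ.real (ball z ρ) < ∫ w in ball z ρ, f w ∂μ) :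
    ρ < 1 / lam := by
  have hV : 0 < μ.real (ball z ρ) := measureReal_ball_pos z hρ
  have hle : ∫ w in ball z ρ, f w ∂μ ≤ 1 * μ.real (ball z ρ) := by
    rw [one_mul, ← mul_one (μ.real _), ← smul_eq_mul, ← setIntegral_const]
    exact setIntegral_mono (integrableOn_ball_of_continuous hf z ρ)
      (integrableOn_const measure_ball_lt_top.ne) hf1
  rw [lt_div_iff₀ hlam, mul_comm]
  exact lt_of_mul_lt_mul_right (h.trans_le hle) hV.le

lemma hardySet_subset_ball (hf : Continuous f) (hf1 : ∀ x, f x ≤ 1) (hlam : 0 < lam) :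
    hardySet μ F f lam ⊆ ball 0 1 := by
  rintro x ⟨z, -, hz, ρ, hρ, hx, h⟩
  have hρ' := radius_lt_one_div_of_lt_setIntegral hf hf1 hρ hlam h
  have h4 : 4 / lam = 4 * (1 / lam) := by ring
  have : 0 < 1 / lam := by positivity
  rw [mem_ball_zero_iff]
  linarith [norm_lt_of_mem_ball hx]

lemma hardySet_eq_empty (hf : LipschitzWith K f) (hfF : ∀ x ∈ F ∩ closedBall 0 (1 / 2), f x = 0)
    (hlam : 0 < lam) (hK : K ≤ lam) : hardySet μ F f lam = ∅ := by
  refine eq_empty_of_forall_notMem ?_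
  rintro x ⟨z, hz, hz1, ρ, _, -, hlt⟩
  have h4 : 0 < 4 / lam := by positivity
  have hfz : f z = 0 := hfF z ⟨hz, mem_closedBall_zero_iff.2 (by linarith)⟩
  refine hlt.not_ge ?_
  rw [mul_comm, ← smul_eq_mul, ← setIntegral_const]
  refine setIntegral_mono_on (integrableOn_ball_of_continuous hf.continuous z ρ)
    (integrableOn_const measure_ball_lt_top.ne) measurableSet_ball fun w hw => ?_
  have hw' := hf.dist_le_mul w z
  rw [hfz, Real.dist_0_eq_abs] at hw'
  calc f w ≤ K * dist w z := (le_abs_self _).trans hw'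
    _ ≤ lam * ρ := by gcongr; exact (mem_ball.1 hw).le

lemma measureReal_sublevel_inter_ball_le (hf : LipschitzWith K f) {κ : ℝ} (hρ : 0 < ρ)
    (hlam : 0 < lam) (h : lam * ρ * μ.real (ball z ρ) < ∫ w in ball z ρ, f w ∂μ)
    (hκ : ∫ w in ball z ρ, ‖fderiv ℝ f w‖ ∂μ ≤ κ * lam * μ.real (ball z ρ)) :
    μ.real ({x | f x < lam * ρ / 2} ∩ ball z ρ)
      ≤ 2 ^ (finrank ℝ E + 2) * κ * μ.real (ball z ρ) := by
  have hV : 0 < μ.real (ball z ρ) := measureReal_ball_pos z hρ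
  set m := ⨍ y in ball z ρ, f y ∂μ with hm
  have hlt : lam * ρ < m := by rwa [hm, setAverage_eq, smul_eq_mul, lt_inv_mul_iff₀' hV]
  have hsub : {x | f x < lam * ρ / 2} ∩ ball z ρ
      ⊆ {x | lam * ρ / 2 ≤ |f x - m|} ∩ ball z ρ := by
    refine inter_subset_inter_left _ fun x (hx : f x < _) => ?_
    exact le_trans (by linarith) ((le_abs_self _).trans_eq (abs_sub_comm m (f x)))
  refine le_of_mul_le_mul_left (a := lam * ρ / 2) ?_ (by positivity)
  calc lam * ρ / 2 * μ.real ({x | f x < lam * ρ / 2} ∩ ball z ρ)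
      ≤ lam * ρ / 2 * (μ.restrict (ball z ρ)).real {x | lam * ρ / 2 ≤ |f x - m|} := by
        rw [measureReal_restrict_apply' measurableSet_ball]
        gcongr
        exact ((measure_mono inter_subset_right).trans_lt measure_ball_lt_top).ne
    _ ≤ ∫ x in ball z ρ, |f x - m| ∂μ :=
        mul_meas_ge_le_integral_of_nonneg (.of_forall fun x => abs_nonneg _)
          (integrableOn_ball_of_continuous (hf.continuous.sub continuous_const).abs z ρ) _
    _ ≤ 2 ^ (finrank ℝ E + 1) * ρ * (κ * lam * μ.real (ball z ρ)) := by
        refine (integral_ball_abs_sub_average_le hf z hρ).trans ?_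
        gcongr
    _ = lam * ρ / 2 * (2 ^ (finrank ℝ E + 2) * κ * μ.real (ball z ρ)) := by ring

lemma abs_sub_le_of_notMem_badSet (hf : LipschitzWith K f) (hf0 : ∀ x, 0 ≤ f x) {x y : E} {t : ℝ}
    (hxy : 4 * dist x y ≤ 1) (hx : x ∉ badSet μ F f t) (hyF : y ∈ F) (hy : ‖y‖ < 1 / 2 - 4 / t)
    (hfy : f y = 0) : |f x - f y| ≤ lipFactor E * t * dist x y := by
  rcases (dist_nonneg (x := x) (y := y)).eq_or_lt with h | h
  · simp [dist_eq_zero.1 h.symm]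
  rw [hfy, sub_zero, abs_of_nonneg (hf0 x)]
  refine le_of_notMem_maximalSet_of_setIntegral_le hf h hxy (fun hmax => hx (.inl hmax)) ?_
  by_contra! hlt
  exact hx (.inr ⟨y, hyF, hy, 2 * dist x y, by positivity, by rw [mem_ball]; linarith, hlt⟩)

lemma abs_sub_le_of_mem_diff_badSet_union (hf : IsCotest F f) {t : ℝ} (ht : 0 < t)
    (hρ : 8 * ρ ≤ 1) (hz : ‖z‖ + ρ ≤ 1 / 2 - 4 / t) {x y : E}
    (hx : x ∈ ball z ρ \ badSet μ F f t ∪ F ∩ ball z ρ)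
    (hy : y ∈ ball z ρ \ badSet μ F f t ∪ F ∩ ball z ρ) :
    |f x - f y| ≤ lipFactor E * t * dist x y := by
  obtain ⟨K, hK⟩ := hf.lipschitz
  have h4t : 0 < 4 / t := by positivity
  have hnorm : ∀ w ∈ F ∩ ball z ρ, ‖w‖ < 1 / 2 - 4 / t := fun w hw =>
    (norm_lt_of_mem_ball hw.2).trans_le hz
  have hzero : ∀ w ∈ F ∩ ball z ρ, f w = 0 := fun w hw =>
    hf.eq_zero_of_mem_ball hw (by linarith)
  have hdist : ∀ v ∈ ball z ρ, ∀ w ∈ ball z ρ, 4 * dist v w ≤ 1 := fun v hv w hw => by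
    linarith [dist_triangle_right v w z, mem_ball.1 hv, mem_ball.1 hw]
  have hmixed : ∀ v ∈ ball z ρ \ badSet μ F f t, ∀ w ∈ F ∩ ball z ρ,
      |f v - f w| ≤ lipFactor E * t * dist v w := fun v hv w hw =>
    abs_sub_le_of_notMem_badSet hK hf.nonneg (hdist v hv.1 w hw.2) hv.2 hw.1 (hnorm w hw)
      (hzero w hw)
  rcases hx with hx | hx <;> rcases hy with hy | hy
  · have hxy := hdist x hx.1 y hy.1
    refine (abs_sub_le_of_notMem_maximalSet hK (by linarith [dist_nonneg (x := x) (y := y)])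
      (fun h => hx.2 (.inl h)) fun h => hy.2 (.inl h)).trans ?_
    rw [lipFactor]
    gcongr
    exact le_add_of_nonneg_right zero_le_two
  · exact hmixed x hx y hy
  · rw [abs_sub_comm, dist_comm]
    exact hmixed y hy x hx
  · rw [hzero x hx, hzero y hy, sub_self, abs_zero]
    have := lipFactor_pos (E := E)
    positivity

lemma exists_isTruncation_badSet (hf : IsCotest F f) {j : ℕ} (hj : 1 ≤ j) (hlam : 8 ≤ lam)
    (hz : ‖z‖ < 1 / 2 - 4 / lam) (hρ : ρ < 1 / lam) :
    ∃ g, IsTruncation μ f (ball z ρ) (badSet μ F f (lam * 2 ^ j)) (F ∩ ball z ρ)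
      (lipFactor E * lam * 2 ^ j) g := by
  obtain ⟨K, hK⟩ := hf.lipschitz
  have hlam0 : 0 < lam := by linarith
  have hC := lipFactor_pos (E := E)
  have hρ8 : 8 * ρ ≤ 1 := by
    rw [lt_div_iff₀ hlam0] at hρ
    nlinarith
  have hroom : ‖z‖ + ρ ≤ 1 / 2 - 4 / (lam * 2 ^ j) := by
    have h2j : (2 : ℝ) ≤ 2 ^ j := le_self_pow₀ one_le_two (by lia)
    have hdiv : 4 / (lam * 2 ^ j) ≤ 4 / (lam * 2) := by gcongr
    have hhalf : 4 / (lam * 2) = 2 * (1 / lam) := by field_simp; norm_num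
    have hfour : 4 / lam = 4 * (1 / lam) := by ring
    linarith [one_div_pos.2 hlam0]
  refine exists_isTruncation hK hf.nonneg measurableSet_ball (isOpen_badSet μ F f _).measurableSet
    (by positivity) fun x hx y hy => ?_
  rw [mul_assoc (lipFactor E)]
  exact abs_sub_le_of_mem_diff_badSet_union hf (by positivity) hρ8 hroom hx hy

lemma mul_measureReal_ball_le_add {p c κ : ℝ} (hp : 1 ≤ p) (hF : IsUniformlyFat μ F p c)
    (hf : IsCotest F f) {k : ℕ} (hk : 0 < k) (hlam : 8 ≤ lam) (hz : z ∈ F)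
    (hz1 : ‖z‖ < 1 / 2 - 4 / lam) (hρ : 0 < ρ)
    (h : lam * ρ * μ.real (ball z ρ) < ∫ w in ball z ρ, f w ∂μ)
    (hκ : ∫ w in ball z ρ, ‖fderiv ℝ f w‖ ∂μ ≤ κ * lam * μ.real (ball z ρ)) :
    c * μ.real (ball z ρ) ≤
      3 ^ p * (2 ^ p * 2 ^ (finrank ℝ E + 2) + (4 * lipFactor E * 4 ^ k) ^ (p - 1) * 4) * κ
          * μ.real (ball z ρ)
        + 3 ^ p * (2 ^ p + (8 * lipFactor E) ^ p) * ((k : ℝ) ^ (-p) *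
          ∑ j ∈ Finset.Ico k (2 * k), ((2 : ℝ) ^ p) ^ j *
            μ.real (badSet μ F f (lam * 2 ^ j) ∩ ball z ρ)) := by
  obtain ⟨K, hK⟩ := hf.lipschitz
  have hlam0 : 0 < lam := by linarith
  have hC := lipFactor_pos (E := E)
  have hkR : (0 : ℝ) < k := Nat.cast_pos.2 hk
  have hρlam := radius_lt_one_div_of_lt_setIntegral hK.continuous hf.le_one hρ hlam0 h
  have hρ1 : ρ < 1 := hρlam.trans_le ((div_le_one hlam0).2 (by linarith))
  have hex : ∀ j ∈ Finset.Ico k (2 * k), ∃ g, IsTruncation μ f (ball z ρ)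
      (badSet μ F f (lam * 2 ^ j)) (F ∩ ball z ρ) (lipFactor E * lam * 2 ^ j) g := fun j hj =>
    exists_isTruncation_badSet hf (hk.trans_le (Finset.mem_Ico.1 hj).1) hlam hz1 hρlam
  choose! g hg using hex
  set S := ∑ j ∈ Finset.Ico k (2 * k), ((2 : ℝ) ^ p) ^ j *
    μ.real (badSet μ F f (lam * 2 ^ j) ∩ ball z ρ)
  have hroom : ‖z‖ + ρ ≤ 1 / 2 := by
    have h4 : 4 / lam = 4 * (1 / lam) := by ring
    linarith [one_div_pos.2 hlam0]
  obtain ⟨L, hL⟩ := exists_lipschitzWith_blockAverage fun j hj => (hg j hj).lipschitz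
  have hfat := mul_measureReal_ball_le_integral_coneCutoff hF hz hρ hρ1
    (θ := lam * ρ / 4) (by positivity) hL
    (fun x => blockAverage_nonneg fun j hj => (hg j hj).nonneg x)
    fun x hx => blockAverage_eq_of_forall_eq hk fun j hj =>
      ((hg j hj).eqOn (.inr hx)).trans (hf.eq_zero_of_mem_ball hx hroom)
  have hsub : μ.real ({x | blockAverage k g x < lam * ρ / 2} ∩ ball z ρ)
      ≤ 2 ^ (finrank ℝ E + 2) * κ * μ.real (ball z ρ) + (k : ℝ) ^ (-p) * S :=
    (measureReal_sublevel_blockAverage_le hk measure_ball_lt_top.ne fun j hj =>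
      (hg j hj).eqOn.mono subset_union_left).trans (add_le_add
        (measureReal_sublevel_inter_ball_le hK hρ hlam0 h hκ)
        (sum_Ico_le_rpow_neg_mul_sum hk (by linarith) fun j => measureReal_nonneg))
  calc c * μ.real (ball z ρ)
      ≤ _ := hfat.trans (integral_rpow_norm_fderiv_coneCutoff_le hp hρ hlam0 hC.le hk hK
        (fun j => (isOpen_badSet μ F f _).measurableSet) hg)
    _ ≤ 3 ^ p * (2 ^ p * (2 ^ (finrank ℝ E + 2) * κ * μ.real (ball z ρ) + (k : ℝ) ^ (-p) * S)
        + (8 * lipFactor E / k) ^ p * S + (4 * lipFactor E * 4 ^ k) ^ (p - 1) * (4 / lam) *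
          (κ * lam * μ.real (ball z ρ))) := by gcongr
    _ = _ := by
      rw [Real.div_rpow (by positivity) hkR.le, Real.rpow_neg hkR.le]
      field_simp
      ring

lemma measureReal_ball_le_sum {p c : ℝ} (hp : 1 ≤ p) (hc : 0 < c) (hF : IsUniformlyFat μ F p c)
    (hf : IsCotest F f) {k : ℕ} (hk : 0 < k) (hlam : 8 ≤ lam) (hz : z ∈ F)
    (hz1 : ‖z‖ < 1 / 2 - 4 / lam) (hρ : 0 < ρ)
    (h : lam * ρ * μ.real (ball z ρ) < ∫ w in ball z ρ, f w ∂μ)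
    (hκ : ∫ w in ball z ρ, ‖fderiv ℝ f w‖ ∂μ
      ≤ smallGradient E p c k * lam * μ.real (ball z ρ)) :
    μ.real (ball z ρ) ≤ gainConst E p c * (k : ℝ) ^ (-p) *
      ∑ j ∈ Finset.Ico k (2 * k), ((2 : ℝ) ^ p) ^ j *
        μ.real (badSet μ F f (lam * 2 ^ j) ∩ ball z ρ) := by
  have hsplit := mul_measureReal_ball_le_add hp hF hf hk hlam hz hz1 hρ h hκ
  have hsmall := mul_le_mul_of_nonneg_right (mul_smallGradient_le (E := E) p c k)
    (measureReal_nonneg (μ := μ) (s := ball z ρ))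
  rw [gainConst, mul_assoc, mul_assoc, div_mul_eq_mul_div, le_div_iff₀ hc]
  linarith

lemma measure_le_of_ball_cover_sum {ι : Type*} {J : Finset ι} {w : ι → ℝ} (hw : ∀ j, 0 ≤ w j)
    {W : ι → Set E} (hW : ∀ j, MeasurableSet (W j)) {C : ℝ} (hC : 0 ≤ C) (S : Set E) (R : ℝ)
    (hS : ∀ x ∈ S, ∃ y r, 0 < r ∧ r ≤ R ∧ x ∈ ball y r ∧
      μ.real (ball y r) ≤ C * ∑ j ∈ J, w j * μ.real (W j ∩ ball y r)) :
    μ S ≤ ENNReal.ofReal (5 ^ finrank ℝ E * C) * ∑ j ∈ J, ENNReal.ofReal (w j) * μ (W j) := by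
  set ν : Measure E :=
    ENNReal.ofReal C • ∑ j ∈ J, ENNReal.ofReal (w j) • μ.restrict (W j) with hν
  refine (measure_le_of_ball_cover ν S R fun x hx => ?_).trans_eq ?_
  · obtain ⟨y, r, hr, hrR, hxr, h⟩ := hS x hx
    refine ⟨y, r, hr, hrR, hxr, ?_⟩
    rw [← ofReal_measureReal (measure_ball_lt_top (μ := μ)).ne]
    refine (ENNReal.ofReal_le_ofReal h).trans_eq ?_
    rw [ENNReal.ofReal_mul hC,
      ENNReal.ofReal_sum_of_nonneg fun j _ => mul_nonneg (hw j) measureReal_nonneg]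
    simp only [hν, Measure.smul_apply, Measure.finsetSum_apply, smul_eq_mul]
    congr! 2 with j
    rw [ENNReal.ofReal_mul (hw j), Measure.restrict_apply' (hW j), inter_comm,
      ofReal_measureReal ((measure_mono inter_subset_left).trans_lt measure_ball_lt_top).ne]
  · simp only [hν, Measure.smul_apply, Measure.finsetSum_apply, smul_eq_mul,
      Measure.restrict_apply_univ]
    rw [ENNReal.ofReal_mul (by positivity), mul_assoc]

lemma measure_hardySet_le {p c : ℝ} (hp : 1 ≤ p) (hc : 0 < c) (hF : IsUniformlyFat μ F p c)
    (hf : IsCotest F f) {k : ℕ} (hk : 0 < k) (hlam : 8 ≤ lam) :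
    μ (hardySet μ F f lam) ≤
      μ (maximalSet μ (fun w => ‖fderiv ℝ f w‖) (smallGradient E p c k * lam)) +
      ENNReal.ofReal (5 ^ finrank ℝ E * (gainConst E p c * (k : ℝ) ^ (-p))) *
        ∑ j ∈ Finset.Ico k (2 * k), ENNReal.ofReal (((2 : ℝ) ^ p) ^ j) *
          μ (badSet μ F f (lam * 2 ^ j)) := by
  obtain ⟨K, hK⟩ := hf.lipschitz
  have hlam0 : 0 < lam := by linarith
  have hD := gainConst_pos (E := E) p hc
  set M := maximalSet μ (fun w => ‖fderiv ℝ f w‖) (smallGradient E p c k * lam)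
  refine (measure_le_inter_add_sdiff μ _ M).trans (add_le_add (measure_mono inter_subset_right) ?_)
  refine measure_le_of_ball_cover_sum (fun j => by positivity)
    (fun j => (isOpen_badSet μ F f _).measurableSet) (by positivity) _ 1 ?_
  rintro x ⟨⟨z, hz, hz1, ρ, hρ, hxρ, hlt⟩, hx⟩
  have hρ1 : ρ ≤ 1 := (radius_lt_one_div_of_lt_setIntegral hK.continuous hf.le_one hρ hlam0
    hlt).le.trans ((div_le_one hlam0).2 (by linarith))
  exact ⟨z, ρ, hρ, hρ1, hxρ, measureReal_ball_le_sum hp hc hF hf hk hlam hz hz1 hρ hlt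
    (setIntegral_ball_le_of_notMem_maximalSet hx hρ hρ1 hxρ)⟩

end GoodLambda

/-! ### Summation over dyadic levels -/

section Absorption

open scoped ENNReal

lemma le_three_mul_of_le_add_half_mul {a b : ℝ≥0∞} (ha : a ≠ ⊤) (h : a ≤ b + 2⁻¹ * (b + a)) :
    a ≤ 3 * b := by
  refine (ENNReal.add_le_add_iff_right ha).1 ?_
  calc a + a = 2 * a := (two_mul a).symm
    _ ≤ 2 * (b + 2⁻¹ * (b + a)) := by gcongr
    _ = 3 * b + a := by
      rw [mul_add, ← mul_assoc, ENNReal.mul_inv_cancel two_ne_zero ENNReal.ofNat_ne_top]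
      ring

lemma tsum_pow_mul_shift_le {σ π : ℝ≥0∞} {j : ℕ} (h : π ^ j ≤ 2 * σ ^ j) (u : ℕ → ℝ≥0∞) :
    ∑' i, σ ^ i * (π ^ j * u (i + j)) ≤ 2 * ∑' i, σ ^ i * u i := by
  calc ∑' i, σ ^ i * (π ^ j * u (i + j))
      ≤ ∑' i, 2 * (σ ^ (i + j) * u (i + j)) := ENNReal.tsum_le_tsum fun i => by
        calc σ ^ i * (π ^ j * u (i + j)) ≤ σ ^ i * (2 * σ ^ j * u (i + j)) := by gcongr
          _ = 2 * (σ ^ (i + j) * u (i + j)) := by ring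
    _ = 2 * ∑' i, σ ^ (i + j) * u (i + j) := ENNReal.tsum_mul_left
    _ ≤ 2 * ∑' i, σ ^ i * u i := by
        exact mul_le_mul_right
          (ENNReal.tsum_comp_le_tsum_of_injective (add_left_injective j) fun i => σ ^ i * u i) 2

lemma tsum_pow_mul_le_three_mul_tsum {a b : ℕ → ℝ≥0∞} {σ π Q : ℝ≥0∞} {k : ℕ}
    (hπ : ∀ j < 2 * k, π ^ j ≤ 2 * σ ^ j) (hQ : Q * k * 2 ≤ 2⁻¹)
    (hrec : ∀ i, a i ≤ b i + Q * ∑ j ∈ Finset.Ico k (2 * k), π ^ j * (b (i + j) + a (i + j)))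
    (hfin : ∑' i, σ ^ i * a i ≠ ⊤) :
    ∑' i, σ ^ i * a i ≤ 3 * ∑' i, σ ^ i * b i := by
  refine le_three_mul_of_le_add_half_mul hfin ?_
  set S := ∑' i, σ ^ i * b i + ∑' i, σ ^ i * a i with hS
  have hshift : ∀ j ∈ Finset.Ico k (2 * k),
      ∑' i, σ ^ i * (π ^ j * (b (i + j) + a (i + j))) ≤ 2 * S := fun j hj => by
    rw [hS, ← ENNReal.tsum_add]
    simp only [← mul_add]
    exact tsum_pow_mul_shift_le (hπ j (Finset.mem_Ico.1 hj).2) fun i => b i + a i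
  calc ∑' i, σ ^ i * a i
      ≤ ∑' i, (σ ^ i * b i + Q * ∑ j ∈ Finset.Ico k (2 * k),
          σ ^ i * (π ^ j * (b (i + j) + a (i + j)))) := ENNReal.tsum_le_tsum fun i => by
        refine (mul_le_mul_right (hrec i) _).trans_eq ?_
        rw [mul_add, ← Finset.mul_sum, mul_left_comm]
    _ = ∑' i, σ ^ i * b i + Q * ∑ j ∈ Finset.Ico k (2 * k),
          ∑' i, σ ^ i * (π ^ j * (b (i + j) + a (i + j))) := by
        rw [ENNReal.tsum_add, ENNReal.tsum_mul_left,
          Summable.tsum_finsetSum fun j _ => ENNReal.summable]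
    _ ≤ ∑' i, σ ^ i * b i + Q * ∑ _j ∈ Finset.Ico k (2 * k), 2 * S := by
        gcongr with j hj
        exact hshift j hj
    _ = ∑' i, σ ^ i * b i + Q * k * 2 * S := by
        rw [Finset.sum_const, card_Ico_two_mul, nsmul_eq_mul]
        ring
    _ ≤ _ := by gcongr

end Absorption

lemma exists_nat_mul_rpow_neg_mul_le {p : ℝ} (hp : 1 < p) (D : ℝ) {η : ℝ} (hη : 0 < η) :
    ∃ k : ℕ, 0 < k ∧ D * (k : ℝ) ^ (-p) * k ≤ η := by
  have hlim : Filter.Tendsto (fun k : ℕ => D * (k : ℝ) ^ (-(p - 1))) Filter.atTop (nhds 0) := by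
    simpa using ((tendsto_rpow_neg_atTop (sub_pos.2 hp)).comp
      tendsto_natCast_atTop_atTop).const_mul D
  obtain ⟨k, hkη, hk⟩ :=
    ((hlim.eventually (ge_mem_nhds hη)).and (Filter.eventually_gt_atTop 0)).exists
  refine ⟨k, hk, le_of_eq_of_le ?_ hkη⟩
  have hkR : (k : ℝ) ≠ 0 := by positivity
  rw [neg_sub', sub_neg_eq_add, Real.rpow_add_one hkR, mul_assoc]

lemma exists_two_rpow_pow_le {θ : ℝ} (hθ : 0 < θ) {m : ℕ} (hm : 0 < m) (p : ℝ) :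
    ∃ ε : ℝ, 0 < ε ∧ ε < θ ∧ ∀ j < m, ((2 : ℝ) ^ p) ^ j ≤ 2 * ((2 : ℝ) ^ (p - ε)) ^ j := by
  have hmR : (0 : ℝ) < m := Nat.cast_pos.2 hm
  refine ⟨min (θ / 2) (1 / m), by positivity, (min_le_left _ _).trans_lt (by linarith), ?_⟩
  intro j hj
  have hjm : (j : ℝ) ≤ m := by exact_mod_cast hj.le
  simp only [← Real.rpow_mul_natCast two_pos.le]
  calc (2 : ℝ) ^ (p * j) ≤ 2 ^ (1 + (p - min (θ / 2) (1 / m)) * j) := by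
        refine Real.rpow_le_rpow_of_exponent_le one_le_two ?_
        have : min (θ / 2) (1 / (m : ℝ)) * j ≤ 1 / m * m := by gcongr; exact min_le_right _ _
        rw [one_div_mul_cancel hmR.ne'] at this
        linarith
    _ = _ := by rw [Real.rpow_add two_pos, Real.rpow_one]

section HardySum

variable {E : Type*} [NormedAddCommGroup E] [NormedSpace ℝ E] [FiniteDimensional ℝ E]
  [MeasurableSpace E] [BorelSpace E] {μ : Measure E} [μ.IsAddHaarMeasure]
  {F : Set E} {f : E → ℝ} {p c : ℝ}

lemma tsum_measure_hardySet_ne_top (hf : IsCotest F f) (s : ℝ) :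
    ∑' i : ℕ, ENNReal.ofReal (2 ^ s) ^ i * μ (hardySet μ F f (16 * 2 ^ i)) ≠ ⊤ := by
  obtain ⟨K, hK⟩ := hf.lipschitz
  obtain ⟨N, hN⟩ := pow_unbounded_of_one_lt (K : ℝ) one_lt_two
  rw [tsum_eq_sum (s := Finset.range N) fun i hi => ?_]
  · refine (ENNReal.sum_lt_top.2 fun i _ =>
      ENNReal.mul_lt_top (ENNReal.pow_lt_top ENNReal.ofReal_lt_top) ?_).ne
    exact (measure_mono (hardySet_subset_ball hK.continuous hf.le_one (by positivity))).trans_lt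
      measure_ball_lt_top
  · have hKi : (K : ℝ) ≤ 16 * 2 ^ i := by
      have hNi : (2 : ℝ) ^ N ≤ 2 ^ i := pow_le_pow_right₀ one_le_two (by simpa using hi)
      linarith [pow_pos (two_pos (α := ℝ)) i]
    rw [hardySet_eq_empty hK hf.eq_zero (by positivity) hKi, measure_empty, mul_zero]

lemma measure_hardySet_two_pow_le (hp : 1 ≤ p) (hc : 0 < c) (hF : IsUniformlyFat μ F p c)
    (hf : IsCotest F f) {k : ℕ} (hk : 0 < k) (i : ℕ) :
    μ (hardySet μ F f (16 * 2 ^ i)) ≤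
      μ (maximalSet μ (fun w => ‖fderiv ℝ f w‖) (smallGradient E p c k * 16 * 2 ^ i)) +
      ENNReal.ofReal (5 ^ finrank ℝ E * (gainConst E p c * (k : ℝ) ^ (-p))) *
        ∑ j ∈ Finset.Ico k (2 * k), ENNReal.ofReal (2 ^ p) ^ j *
          (μ (maximalSet μ (fun w => ‖fderiv ℝ f w‖) (smallGradient E p c k * 16 * 2 ^ (i + j)))
            + μ (hardySet μ F f (16 * 2 ^ (i + j)))) := by
  have h2i : (1 : ℝ) ≤ 2 ^ i := one_le_pow₀ one_le_two
  refine (measure_hardySet_le hp hc hF hf hk (lam := 16 * 2 ^ i) (by linarith)).trans ?_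
  rw [mul_assoc (smallGradient E p c k)]
  gcongr with j
  · exact (ENNReal.ofReal_pow (by positivity) j).le
  rw [mul_assoc 16, ← pow_add]
  refine (measure_union_le _ _).trans ?_
  gcongr
  refine maximalSet_anti μ _ ?_
  gcongr
  exact mul_le_of_le_one_left (by positivity) (min_le_left _ _)

lemma exists_measure_hardySet_le_lintegral (μ : Measure E) [μ.IsAddHaarMeasure] (hp : 1 < p)
    (hc : 0 < c) :
    ∃ ε C : ℝ, 0 < ε ∧ ε < p - 1 ∧ 0 < C ∧ ∀ F : Set E, IsUniformlyFat μ F p c →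
      ∀ f, IsCotest F f →
        μ (hardySet μ F f 16)
          ≤ ENNReal.ofReal C * ∫⁻ x, ENNReal.ofReal (‖fderiv ℝ f x‖ ^ (p - ε)) ∂μ := by
  obtain ⟨k, hk, hkD⟩ := exists_nat_mul_rpow_neg_mul_le hp (5 ^ finrank ℝ E * gainConst E p c)
    (η := 4⁻¹) (by norm_num)
  obtain ⟨ε, hε, hεp, h2⟩ := exists_two_rpow_pow_le (sub_pos.2 hp) (m := 2 * k) (by positivity) p
  have hD := gainConst_pos (E := E) p hc
  set τ := smallGradient E p c k * 16
  have hτ : 0 < τ := mul_pos (smallGradient_pos p hc k) (by norm_num)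
  have hgeom : 1 < (2 : ℝ) ^ (p - ε - 1) := Real.one_lt_rpow one_lt_two (by linarith)
  set C := 5 ^ finrank ℝ E * (2 / τ) *
    ((2 : ℝ) ^ (p - ε - 1) / (2 ^ (p - ε - 1) - 1) * (2 / τ) ^ (p - ε - 1))
  have : 0 < C := by
    have := sub_pos.2 hgeom
    positivity
  refine ⟨ε, 3 * C, hε, hεp, by positivity, fun F hF f hf => ?_⟩
  have hQ : ENNReal.ofReal (5 ^ finrank ℝ E * (gainConst E p c * (k : ℝ) ^ (-p))) * k * 2
      ≤ 2⁻¹ := by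
    rw [← ENNReal.ofReal_natCast, ← ENNReal.ofReal_ofNat, ← ENNReal.ofReal_mul (by positivity),
      ← ENNReal.ofReal_mul (by positivity), ← ENNReal.ofReal_inv_of_pos two_pos]
    exact ENNReal.ofReal_le_ofReal (by linarith)
  have hπ : ∀ j < 2 * k, ENNReal.ofReal (2 ^ p) ^ j ≤ 2 * ENNReal.ofReal (2 ^ (p - ε)) ^ j := by
    intro j hj
    rw [← ENNReal.ofReal_pow (by positivity), ← ENNReal.ofReal_pow (by positivity),
      ← ENNReal.ofReal_ofNat, ← ENNReal.ofReal_mul (by positivity)]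
    exact ENNReal.ofReal_le_ofReal (h2 j hj)
  have hmax := tsum_measure_maximalSet_le (μ := μ) (measurable_fderiv ℝ f).norm
    (s := p - ε) (by linarith) hτ
  simp only [norm_norm, ENNReal.ofReal_pow (Real.rpow_nonneg zero_le_two _)] at hmax
  calc μ (hardySet μ F f 16) = ENNReal.ofReal (2 ^ (p - ε)) ^ 0 * μ (hardySet μ F f (16 * 2 ^ 0)) :=
        by simp
    _ ≤ ∑' i : ℕ, ENNReal.ofReal (2 ^ (p - ε)) ^ i * μ (hardySet μ F f (16 * 2 ^ i)) :=
        ENNReal.le_tsum 0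
    _ ≤ 3 * (ENNReal.ofReal C * ∫⁻ x, ENNReal.ofReal (‖fderiv ℝ f x‖ ^ (p - ε)) ∂μ) := by
        refine (tsum_pow_mul_le_three_mul_tsum hπ hQ
          (measure_hardySet_two_pow_le hp.le hc hF hf hk)
          (tsum_measure_hardySet_ne_top hf _)).trans ?_
        gcongr
    _ = _ := by
        rw [ENNReal.ofReal_mul (p := 3) (by norm_num), ENNReal.ofReal_ofNat, mul_assoc]

end HardySum

/-! ### Energy below the critical exponent -/

lemma lintegral_enorm_rpow_le_measure_mul {X : Type*} [MeasurableSpace X] {ν : Measure X}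
    {g : X → ℝ} (hg : AEStronglyMeasurable g ν) {s : ℝ} (hs : 1 ≤ s) :
    (∫⁻ x, ‖g x‖ₑ ∂ν) ^ s ≤ ν univ ^ (s - 1) * ∫⁻ x, ‖g x‖ₑ ^ s ∂ν := by
  have hs0 : 0 < s := one_pos.trans_le hs
  have hHölder := eLpNorm'_le_eLpNorm'_mul_rpow_measure_univ one_pos hs hg
  simp only [eLpNorm'_eq_lintegral_enorm, ENNReal.rpow_one, div_one] at hHölder
  calc (∫⁻ x, ‖g x‖ₑ ∂ν) ^ s
      ≤ ((∫⁻ x, ‖g x‖ₑ ^ s ∂ν) ^ (1 / s) * ν univ ^ (1 - 1 / s)) ^ s := by gcongr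
    _ = ν univ ^ (s - 1) * ∫⁻ x, ‖g x‖ₑ ^ s ∂ν := by
      rw [ENNReal.mul_rpow_of_nonneg _ _ hs0.le, ← ENNReal.rpow_mul, ← ENNReal.rpow_mul,
        one_div_mul_cancel hs0.ne', ENNReal.rpow_one, sub_mul, one_mul,
        one_div_mul_cancel hs0.ne', mul_comm]

lemma ball_subset_hardySet {E : Type*} [NormedAddCommGroup E] [MeasurableSpace E] {μ : Measure E}
    {F : Set E} (hF : 0 ∈ F) {f : E → ℝ}
    (hf : (1 - 3 / 4) * μ.real (ball 0 (1 / 64)) < ∫ x in ball (0 : E) (1 / 64), f x ∂μ) :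
    ball 0 (1 / 64) ⊆ hardySet μ F f 16 := fun x hx =>
  ⟨0, hF, by norm_num, 1 / 64, by norm_num, hx, by convert hf using 2; norm_num⟩

section Energy

variable {E : Type*} [NormedAddCommGroup E] [NormedSpace ℝ E] [FiniteDimensional ℝ E]
  [MeasurableSpace E] [BorelSpace E] {μ : Measure E} [μ.IsAddHaarMeasure]

section Poincare

variable [Nontrivial E] {u : E → ℝ} {K : NNReal} {z : E} {R : ℝ}

lemma lintegral_enorm_le_of_eq_zero (hu : LipschitzWith K u) (hR : 0 ≤ R)
    (h0 : ∀ x ∉ ball z R, u x = 0) :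
    ∫⁻ x, ‖u x‖ₑ ∂μ ≤ ENNReal.ofReal (2 * R) * ∫⁻ x, ‖fderiv ℝ u x‖ₑ ∂μ := by
  obtain ⟨h, hh⟩ := exists_norm_eq E (mul_nonneg zero_le_two hR)
  have htranslate := lintegral_enorm_translate_sub_le (μ := μ) hu h MeasurableSet.univ convex_univ
  simp only [mem_univ, and_self, ofPred_true, Measure.restrict_univ] at htranslate
  rw [← ofReal_norm, hh] at htranslate
  refine (lintegral_mono fun x => ?_).trans htranslate
  by_cases hx : x ∈ ball z R
  · have hxh : x + h ∉ ball z R := fun hxh => by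
      have htri : ‖h‖ ≤ dist (x + h) z + dist x z := by
        simpa [dist_eq_norm] using dist_triangle_right (x + h) x z
      linarith [mem_ball.1 hx, mem_ball.1 hxh]
    rw [h0 _ hxh, zero_sub, enorm_neg]
  · simp [h0 x hx]

lemma lintegral_enorm_rpow_le_of_eq_zero (hu : LipschitzWith K u) (hR : 0 ≤ R)
    (h0 : ∀ x ∉ ball z R, u x = 0) {s : ℝ} (hs : 1 ≤ s) :
    (∫⁻ x, ‖u x‖ₑ ∂μ) ^ s ≤
      ENNReal.ofReal (2 * R) ^ s * μ (ball z R) ^ (s - 1) * ∫⁻ x, ‖fderiv ℝ u x‖ₑ ^ s ∂μ := by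
  have hgrad : ∫⁻ x, ‖fderiv ℝ u x‖ₑ ∂μ = ∫⁻ x in ball z R, ‖fderiv ℝ u x‖ₑ ∂μ := by
    rw [← lintegral_indicator measurableSet_ball]
    refine lintegral_congr_ae ?_
    filter_upwards [ae_fderiv_eq_of_eqOn (μ := μ) hu (LipschitzWith.const 0)
      measurableSet_ball.compl h0] with x hx
    by_cases hxB : x ∈ ball z R
    · rw [indicator_of_mem hxB]
    · rw [indicator_of_notMem hxB, hx hxB, fderiv_fun_const, ← ofReal_norm, Pi.zero_apply,
        norm_zero, ENNReal.ofReal_zero]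
  have hHölder := lintegral_enorm_rpow_le_measure_mul (ν := μ.restrict (ball z R))
    (measurable_fderiv ℝ u).norm.aestronglyMeasurable hs
  simp only [Measure.restrict_apply_univ, enorm_norm] at hHölder
  calc (∫⁻ x, ‖u x‖ₑ ∂μ) ^ s
      ≤ (ENNReal.ofReal (2 * R) * ∫⁻ x in ball z R, ‖fderiv ℝ u x‖ₑ ∂μ) ^ s := by
        rw [← hgrad]
        gcongr
        exact lintegral_enorm_le_of_eq_zero hu hR h0
    _ ≤ ENNReal.ofReal (2 * R) ^ s *
          (μ (ball z R) ^ (s - 1) * ∫⁻ x in ball z R, ‖fderiv ℝ u x‖ₑ ^ s ∂μ) := by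
        rw [ENNReal.mul_rpow_of_nonneg _ _ (by linarith)]
        gcongr
    _ ≤ _ := by
        rw [mul_assoc]
        exact mul_le_mul_right (mul_le_mul_right (setLIntegral_le_lintegral _ _) _) _

lemma ofReal_div_le_lintegral_rpow_norm_fderiv (hu : LipschitzWith K u) (hR : 0 < R)
    (h1 : ∀ x ∉ ball z R, u x = 1) {s : ℝ} (hs : 1 ≤ s) {m : ℝ} (hm : 0 ≤ m)
    (h : ENNReal.ofReal m ≤ ∫⁻ x, ‖1 - u x‖ₑ ∂μ) :
    ENNReal.ofReal (m ^ s / ((2 * R) ^ s * μ.real (ball z R) ^ (s - 1)))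
      ≤ ∫⁻ x, ENNReal.ofReal (‖fderiv ℝ u x‖ ^ s) ∂μ := by
  have hs0 : 0 ≤ s := by linarith
  have hball : 0 < μ.real (ball z R) := measureReal_ball_pos z hR
  rw [ENNReal.ofReal_div_of_pos (by positivity)]
  refine ENNReal.div_le_of_le_mul' ?_
  have hPoincare := lintegral_enorm_rpow_le_of_eq_zero (μ := μ) (u := fun x => 1 - u x)
    ((LipschitzWith.const 1).sub hu) hR.le (fun x hx => by rw [h1 x hx, sub_self]) hs
  calc ENNReal.ofReal (m ^ s) = ENNReal.ofReal m ^ s := (ENNReal.ofReal_rpow_of_nonneg hm hs0).symm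
    _ ≤ (∫⁻ x, ‖1 - u x‖ₑ ∂μ) ^ s := by gcongr
    _ ≤ _ := hPoincare
    _ = _ := by
        rw [ENNReal.ofReal_mul (p := (2 * R) ^ s) (by positivity),
          ← ENNReal.ofReal_rpow_of_pos (by positivity),
          ← ENNReal.ofReal_rpow_of_pos hball, ofReal_measureReal]
        simp only [fderiv_const_sub, ← ofReal_norm, norm_neg,
          ENNReal.ofReal_rpow_of_nonneg (norm_nonneg _) hs0]

end Poincare

lemma ofReal_le_lintegral_enorm_one_sub {f : E → ℝ} (hf : Continuous f) {z : E} {r θ : ℝ}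
    (h : ∫ x in ball z r, f x ∂μ ≤ (1 - θ) * μ.real (ball z r)) :
    ENNReal.ofReal (θ * μ.real (ball z r)) ≤ ∫⁻ x, ‖1 - f x‖ₑ ∂μ := by
  calc ENNReal.ofReal (θ * μ.real (ball z r))
      ≤ ENNReal.ofReal (∫ x in ball z r, (1 - f x) ∂μ) := by
        rw [integral_sub (integrableOn_ball_of_continuous continuous_const z r)
          (integrableOn_ball_of_continuous hf z r), setIntegral_const, smul_eq_mul]
        gcongr
        linarith
    _ ≤ ∫⁻ x in ball z r, ‖1 - f x‖ₑ ∂μ :=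
        (Real.ofReal_le_enorm _).trans (enorm_integral_le_lintegral_enorm _)
    _ ≤ _ := setLIntegral_le_lintegral _ _

lemma exists_le_lintegral_rpow_norm_fderiv [Nontrivial E] (μ : Measure E) [μ.IsAddHaarMeasure]
    {p c : ℝ} (hp : 1 < p) (hc : 0 < c) :
    ∃ ε c' : ℝ, 0 < ε ∧ ε < p - 1 ∧ 0 < c' ∧ ∀ F : Set E, 0 ∈ F → IsUniformlyFat μ F p c →
      ∀ f, IsCotest F f → (∀ x ∉ ball 0 1, f x = 1) →
        ENNReal.ofReal c' ≤ ∫⁻ x, ENNReal.ofReal (‖fderiv ℝ f x‖ ^ (p - ε)) ∂μ := by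
  obtain ⟨ε, C, hε, hεp, hC, hHardy⟩ := exists_measure_hardySet_le_lintegral μ hp hc
  set V₀ := μ.real (ball (0 : E) (1 / 64))
  have hV₀pos : 0 < V₀ := measureReal_ball_pos 0 (by norm_num)
  have hV₁pos : 0 < μ.real (ball (0 : E) 1) := measureReal_ball_pos 0 one_pos
  refine ⟨ε, min (V₀ / C)
    ((3 / 4 * V₀) ^ (p - ε) / ((2 * 1) ^ (p - ε) * μ.real (ball (0 : E) 1) ^ (p - ε - 1))),
    hε, hεp, lt_min (by positivity) (div_pos (by positivity) (by positivity)), ?_⟩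
  intro F h0F hF f hf hf1
  obtain ⟨K, hK⟩ := hf.lipschitz
  rcases lt_or_ge ((1 - 3 / 4) * V₀) (∫ x in ball 0 (1 / 64), f x ∂μ) with hlarge | hsmall
  · refine (ENNReal.ofReal_le_ofReal (min_le_left _ _)).trans ?_
    rw [ENNReal.ofReal_div_of_pos hC, ofReal_measureReal]
    exact ENNReal.div_le_of_le_mul'
      ((measure_mono (ball_subset_hardySet h0F hlarge)).trans (hHardy F hF f hf))
  · exact (ENNReal.ofReal_le_ofReal (min_le_right _ _)).trans
      (ofReal_div_le_lintegral_rpow_norm_fderiv hK one_pos hf1 (by linarith) (by positivity)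
        (ofReal_le_lintegral_enorm_one_sub hK.continuous hsmall))

end Energy

/-! ### Infimal capacities -/

section Capacity

variable {n : ℕ} {E O : Set (En n)} {t : ℝ} {u : En n → ℝ}

lemma capInfGen_le {ψ : En n → ℝ → ℝ} {ψm : ℝ → ℝ} (hψ : ∀ x s, 0 ≤ s → 0 ≤ ψ x s)
    (hψm : ∀ s, 0 < s → 0 ≤ ψm s) (ht : 0 < t) (hu : u ∈ Adm E O t) :
    capInfGen ψ ψm E O ≤ ∫ x in O, ψ x (gnorm u x) / ψm t := by
  have hnonneg : ∀ s, 0 < s →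
      0 ∈ lowerBounds ((fun u => ∫ x in O, ψ x (gnorm u x) / ψm s) '' Adm E O s) := by
    rintro s hs _ ⟨v, -, rfl⟩
    exact integral_nonneg fun x => div_nonneg (hψ x _ (norm_nonneg _)) (hψm s hs)
  calc capInfGen ψ ψm E O ≤ capLevel ψ ψm E O t :=
        ciInf_le (f := fun s : Ioi (0 : ℝ) => capLevel ψ ψm E O s)
          ⟨0, by rintro _ ⟨s, rfl⟩; exact Real.sInf_nonneg (hnonneg s s.2)⟩ ⟨t, ht⟩
    _ ≤ _ := csInf_le ⟨0, hnonneg t ht⟩ (mem_image_of_mem _ hu)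

lemma le_capInfGen {ψ : En n → ℝ → ℝ} {ψm : ℝ → ℝ} {c : ℝ}
    (hne : ∀ t, 0 < t → (Adm E O t).Nonempty)
    (h : ∀ t, 0 < t → ∀ u ∈ Adm E O t, c ≤ ∫ x in O, ψ x (gnorm u x) / ψm t) :
    c ≤ capInfGen ψ ψm E O := by
  refine le_ciInf fun t => le_csInf ((hne t t.2).image _) ?_
  rintro _ ⟨u, hu, rfl⟩
  exact h t t.2 u hu

lemma smul_mem_Adm (ht : 0 ≤ t) {s : ℝ} (hu : u ∈ Adm E O s) : t • u ∈ Adm E O (t * s) := by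
  obtain ⟨⟨K, hK⟩, huE, hu0⟩ := hu
  refine ⟨⟨_, (lipschitzWith_smul t).comp_lipschitzOnWith hK⟩, fun x hx => ?_, fun x hx => ?_⟩
  · exact mul_le_mul_of_nonneg_left (huE x hx) ht
  · rw [Pi.smul_apply, hu0 x hx, smul_zero]

lemma Adm_nonempty (hE : E ⊆ closedBall 0 (1 / 2)) (ht : 0 ≤ t) :
    (Adm E (ball (0 : En n) 1) t).Nonempty := by
  obtain ⟨K, hK⟩ := exists_lipschitzWith_coneCutoff (LipschitzWith.const (0 : ℝ)) (0 : En n) 1 1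
  refine ⟨_, mul_one t ▸ smul_mem_Adm ht (s := 1) ⟨⟨K, hK.lipschitzOnWith⟩, fun x hx => ?_,
    fun x hx => ?_⟩⟩
  · exact one_le_coneCutoff one_pos (mem_closedBall.1 (hE hx)) rfl
  · rw [isOpen_ball.frontier_eq] at hx
    exact coneCutoff_eq_zero one_pos zero_le_one hx.2 le_rfl

lemma gnorm_smul (ht : 0 ≤ t) (x : En n) : gnorm (t • u) x = t * gnorm u x := by
  rw [gnorm, fderiv_const_smul_field, Pi.smul_apply, norm_smul, Real.norm_of_nonneg ht, gnorm]

lemma gnorm_le_of_lipschitzOnWith {K : NNReal} (hO : IsOpen O)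
    (hu : LipschitzOnWith K u (closure O)) {x : En n} (hx : x ∈ O) : gnorm u x ≤ K :=
  norm_fderiv_le_of_lipschitzOn ℝ (Filter.mem_of_superset (hO.mem_nhds hx) subset_closure) hu

lemma measurable_gnorm (u : En n → ℝ) : Measurable (gnorm u) := (measurable_fderiv ℝ u).norm

lemma integrableOn_gnorm_rpow (hO : IsOpen O) (hvol : volume O ≠ ⊤) {K : NNReal}
    (hu : LipschitzOnWith K u (closure O)) {p : ℝ} (hp : 0 ≤ p) :
    IntegrableOn (fun x => gnorm u x ^ p) O := by
  refine Measure.integrableOn_of_bounded (M := (K : ℝ) ^ p) hvol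
    ((measurable_gnorm u).pow_const p).aestronglyMeasurable ?_
  filter_upwards [ae_restrict_mem hO.measurableSet] with x hx
  have hg : 0 ≤ gnorm u x := norm_nonneg _
  rw [Real.norm_of_nonneg (by positivity)]
  gcongr
  exact gnorm_le_of_lipschitzOnWith hO hu hx

end Capacity

section DoublePhase

variable {n : ℕ} {b : En n → ℝ} {p q t : ℝ} {O : Set (En n)} {x : En n}

lemma aInfOn_nonneg (hb : ∀ x, 0 ≤ b x) (O : Set (En n)) : 0 ≤ aInfOn b O :=
  Real.sInf_nonneg (by rintro _ ⟨x, -, rfl⟩; exact hb x)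

lemma aInfOn_le (hb : ∀ x, 0 ≤ b x) (hx : x ∈ O) : aInfOn b O ≤ b x :=
  csInf_le ⟨0, by rintro _ ⟨y, -, rfl⟩; exact hb y⟩ (mem_image_of_mem b hx)

lemma phi_nonneg (hb : ∀ x, 0 ≤ b x) (p q : ℝ) (x : En n) (ht : 0 ≤ t) : 0 ≤ phi b p q x t := by
  have := hb x
  unfold phi
  positivity

lemma rpow_le_phiMinus (hb : ∀ x, 0 ≤ b x) (p q : ℝ) (O : Set (En n)) (ht : 0 ≤ t) :
    t ^ p ≤ phiMinus b p q O t :=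
  le_add_of_nonneg_right (mul_nonneg (aInfOn_nonneg hb O) (Real.rpow_nonneg ht q))

lemma phiMinus_pos (hb : ∀ x, 0 ≤ b x) (p q : ℝ) (O : Set (En n)) (ht : 0 < t) :
    0 < phiMinus b p q O t :=
  (Real.rpow_pos_of_pos ht p).trans_le (rpow_le_phiMinus hb p q O ht.le)

lemma phi_mul_div_phiMinus_le (hb : ∀ x, 0 ≤ b x) (hq : 0 ≤ q) (ht : 0 < t) {g L M : ℝ}
    (hg : 0 ≤ g) (hgL : g ≤ L) (hM : b x ≤ M) :
    phi b p q x (t * g) / phiMinus b p q O t ≤ g ^ p + t ^ (q - p) * (M * L ^ q) := by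
  have hφ := phi_nonneg hb p q x (mul_nonneg ht.le hg)
  calc phi b p q x (t * g) / phiMinus b p q O t
      ≤ phi b p q x (t * g) / t ^ p := by
        gcongr
        exact rpow_le_phiMinus hb p q O ht.le
    _ = g ^ p + t ^ (q - p) * (b x * g ^ q) := by
        rw [phi, Real.mul_rpow ht.le hg, Real.mul_rpow ht.le hg, Real.rpow_sub ht]
        field_simp
    _ ≤ _ := by
        have := (hb x).trans hM
        gcongr

lemma rpow_mul_rpow_le_phi_div_phiMinus (hb : ∀ x, 0 ≤ b x) (hpq : p ≤ q) (ht : 0 < t)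
    {δ y : ℝ} (hδ : 0 < δ) (hδ1 : δ ≤ 1) (hy : δ ≤ y) (hx : x ∈ O) :
    δ ^ (q - p) * y ^ p ≤ phi b p q x (t * y) / phiMinus b p q O t := by
  have hy0 : 0 < y := hδ.trans_le hy
  have hyp : δ ^ (q - p) * y ^ p ≤ y ^ p :=
    mul_le_of_le_one_left (by positivity) (Real.rpow_le_one hδ.le hδ1 (sub_nonneg.2 hpq))
  have hyq : δ ^ (q - p) * y ^ p ≤ y ^ q := by
    calc δ ^ (q - p) * y ^ p ≤ y ^ (q - p) * y ^ p := by
          gcongr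
      _ = y ^ q := by rw [← Real.rpow_add hy0, sub_add_cancel]
  rw [le_div_iff₀ (phiMinus_pos hb p q O ht), phi, phiMinus, Real.mul_rpow ht.le hy0.le,
    Real.mul_rpow ht.le hy0.le]
  calc δ ^ (q - p) * y ^ p * (t ^ p + aInfOn b O * t ^ q)
      = t ^ p * (δ ^ (q - p) * y ^ p) + aInfOn b O * (t ^ q * (δ ^ (q - p) * y ^ p)) := by ring
    _ ≤ t ^ p * y ^ p + b x * (t ^ q * y ^ q) := by
        have := hb x
        gcongr
        exact aInfOn_le hb hx

lemma mul_rpow_sub_le_phi_rpow_div (hb : ∀ x, 0 ≤ b x) (hp : 0 ≤ p) (hpq : p ≤ q) (ht : 0 < t)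
    {γ δ g : ℝ} (hγ : 0 ≤ γ) (hδ : 0 < δ) (hδ1 : δ ≤ 1) (hg : 0 ≤ g) (hx : x ∈ O) :
    δ ^ ((q - p) * γ) * ((g / t) ^ (p * γ) - δ ^ (p * γ)) ≤
      phi b p q x g ^ γ / phiMinus b p q O t ^ γ := by
  have hφ := phi_nonneg hb p q x hg
  have hφm := phiMinus_pos hb p q O ht
  have hy0 : 0 ≤ g / t := by positivity
  rcases le_total (g / t) δ with hy | hy
  · have : (g / t) ^ (p * γ) ≤ δ ^ (p * γ) := by gcongr
    exact (mul_nonpos_of_nonneg_of_nonpos (by positivity) (sub_nonpos.2 this)).trans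
      (by positivity)
  · have hbase := rpow_mul_rpow_le_phi_div_phiMinus (p := p) hb hpq ht hδ hδ1 hy hx
    rw [mul_div_cancel₀ g ht.ne'] at hbase
    calc δ ^ ((q - p) * γ) * ((g / t) ^ (p * γ) - δ ^ (p * γ))
        ≤ δ ^ ((q - p) * γ) * (g / t) ^ (p * γ) := by
          gcongr
          exact sub_le_self _ (by positivity)
      _ = (δ ^ (q - p) * (g / t) ^ p) ^ γ := by
          rw [Real.mul_rpow (by positivity) (by positivity), ← Real.rpow_mul hδ.le,
            ← Real.rpow_mul hy0]
      _ ≤ (phi b p q x g / phiMinus b p q O t) ^ γ := by gcongr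
      _ = _ := Real.div_rpow hφ hφm.le γ

lemma capPhiInf_le_integral_add (hb : ∀ x, 0 ≤ b x) {M : ℝ} (hM : ∀ x ∈ O, b x ≤ M) (hp : 0 ≤ p)
    (hq : 0 ≤ q) (hO : IsOpen O) (hvol : volume O ≠ ⊤) {E : Set (En n)} {v : En n → ℝ}
    (hv : v ∈ Adm E O 1) {K : NNReal} (hK : LipschitzOnWith K v (closure O)) (ht : 0 < t) :
    capPhiInf b p q E O ≤
      (∫ x in O, gnorm v x ^ p) + t ^ (q - p) * (volume.real O * (M * (K : ℝ) ^ q)) := by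
  have h_int := integrableOn_gnorm_rpow hO hvol hK hp
  have hconst : IntegrableOn (fun _ => t ^ (q - p) * (M * (K : ℝ) ^ q)) O volume :=
    integrableOn_const hvol
  calc capPhiInf b p q E O
      ≤ ∫ x in O, phi b p q x (gnorm (t • v) x) / phiMinus b p q O t :=
        capInfGen_le (fun x _ => phi_nonneg hb p q x) (fun _ hs => (phiMinus_pos hb p q O hs).le)
          ht (by simpa using smul_mem_Adm ht.le hv)
    _ ≤ ∫ x in O, (gnorm v x ^ p + t ^ (q - p) * (M * (K : ℝ) ^ q)) := by
        refine integral_mono_of_nonneg (.of_forall fun x => div_nonneg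
          (phi_nonneg hb p q x (norm_nonneg _)) (phiMinus_pos hb p q O ht).le)
          (h_int.add hconst) ?_
        filter_upwards [ae_restrict_mem hO.measurableSet] with x hx
        rw [gnorm_smul ht.le]
        exact phi_mul_div_phiMinus_le hb hq ht (norm_nonneg _)
          (gnorm_le_of_lipschitzOnWith hO hK hx) (hM x hx)
    _ = _ := by
        rw [integral_add h_int hconst, setIntegral_const, smul_eq_mul]
        ring

lemma capPhiInf_le_integral_rpow (hb : ∀ x, 0 ≤ b x) (hbO : BddAbove (b '' O)) (hp : 0 ≤ p)
    (hpq : p < q) (hO : IsOpen O) (hvol : volume O ≠ ⊤) {E : Set (En n)} {v : En n → ℝ}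
    (hv : v ∈ Adm E O 1) :
    capPhiInf b p q E O ≤ ∫ x in O, gnorm v x ^ p := by
  obtain ⟨M, hM⟩ := hbO
  obtain ⟨K, hK⟩ := hv.1
  set D : ℝ := volume.real O * (M * (K : ℝ) ^ q)
  have hlim : Filter.Tendsto (fun t : ℝ => (∫ x in O, gnorm v x ^ p) + t ^ (q - p) * D)
      (nhdsWithin 0 (Ioi 0)) (nhds (∫ x in O, gnorm v x ^ p)) := by
    have h := (Real.continuousAt_rpow_const 0 (q - p) (.inr (sub_pos.2 hpq).le)).tendsto
    rw [Real.zero_rpow (sub_pos.2 hpq).ne'] at h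
    simpa using ((h.mono_left nhdsWithin_le_nhds).mul_const D).const_add _
  refine ge_of_tendsto hlim ?_
  filter_upwards [self_mem_nhdsWithin] with t ht
  exact capPhiInf_le_integral_add hb (fun x hx => hM (mem_image_of_mem b hx)) hp
    (hp.trans hpq.le) hO hvol hv hK ht

end DoublePhase

section Rescaling

lemma setIntegral_comp_add_smul {V G : Type*} [NormedAddCommGroup V] [NormedSpace ℝ V]
    [FiniteDimensional ℝ V] [MeasurableSpace V] [BorelSpace V] [NormedAddCommGroup G]
    [NormedSpace ℝ G] (μ : Measure V) [μ.IsAddHaarMeasure] (h : V → G) (z : V) {ρ : ℝ}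
    (hρ : 0 < ρ) :
    ρ ^ finrank ℝ V • ∫ x in ball (0 : V) 1, h (z + ρ • x) ∂μ = ∫ x in ball z ρ, h x ∂μ := by
  rw [Measure.setIntegral_comp_smul_of_pos μ (fun y => h (z + y)) _ hρ, smul_unitBall_of_pos hρ,
    smul_inv_smul₀ (by positivity)]
  have := (measurePreserving_add_left μ z).setIntegral_preimage_emb
    (measurableEmbedding_addLeft z) h (ball z ρ)
  rwa [preimage_add_ball, sub_self] at this

variable {n : ℕ} {E : Set (En n)} {z : En n}

lemma gnorm_comp_add_smul (v : En n → ℝ) (z : En n) {ρ : ℝ} (hρ : 0 ≤ ρ) (x : En n) :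
    gnorm (fun y => v (z + ρ • y)) x = ρ * gnorm v (z + ρ • x) := by
  have h := fderiv_comp_smul (𝕜 := ℝ) (f := fun y => v (z + y)) (x := x) ρ
  rw [gnorm, h, fderiv_comp_add_left, norm_smul, Real.norm_of_nonneg hρ, gnorm]

lemma shiftedSet_comp_add_smul (E : Set (En n)) (z w : En n) (r ρ : ℝ) :
    shiftedSet {x | z + r • x ∈ E} w ρ = shiftedSet E (z + r • w) (r * ρ) := by
  ext x
  simp only [shiftedSet, mem_ofPred_eq, smul_add, mul_smul, add_assoc]

lemma LocUnifPhiFat.comp_add_smul {a : En n → ℝ} {p q c r s : ℝ} (h : LocUnifPhiFat a p q E c s)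
    (z : En n) (hr : 0 < r) (hrs : r ≤ s) :
    LocUnifPhiFat (fun x => a (z + r • x)) p q {x | z + r • x ∈ E} c 1 := by
  intro w hw ρ hρ hρ1
  have hfat := h (z + r • w) hw (r * ρ) (by positivity)
    ((mul_lt_of_lt_one_right hr hρ1).trans_le hrs)
  simpa only [shiftedSet_comp_add_smul, smul_add, mul_smul, add_assoc] using hfat

lemma comp_add_smul_mem_Adm {F : Set (En n)} {v : En n → ℝ} (hv : ∃ K, LipschitzWith K v) {ρ : ℝ}
    (hρ : 0 < ρ) (hvF : ∀ x ∈ F ∩ closedBall z (ρ / 2), 1 ≤ v x) (hv0 : ∀ x ∉ ball z ρ, v x = 0) :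
    (fun x => v (z + ρ • x)) ∈ Adm (shiftedSet F z ρ) (ball 0 1) 1 := by
  obtain ⟨K, hK⟩ := hv
  have hdist (x : En n) : dist (z + ρ • x) z = ρ * ‖x‖ := by
    rw [dist_self_add_left, norm_smul, Real.norm_of_nonneg hρ.le]
  refine ⟨⟨_, (hK.comp ((LipschitzWith.const z).add (lipschitzWith_smul ρ))).lipschitzOnWith⟩,
    fun x hx => hvF _ ⟨hx.2, ?_⟩, fun x hx => hv0 _ ?_⟩
  · have hx1 : ‖x‖ ≤ 1 / 2 := mem_closedBall_zero_iff.1 hx.1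
    rw [mem_closedBall, hdist]
    nlinarith
  · rw [frontier_ball _ one_ne_zero, mem_sphere_zero_iff_norm] at hx
    rw [mem_ball, hdist, hx, mul_one]
    exact lt_irrefl ρ

lemma isUniformlyFat_of_locUnifPhiFat {b : En n → ℝ} (hb : ∀ x, 0 ≤ b x)
    (hbdd : ∀ z r, BddAbove (b '' ball z r)) {p q c : ℝ} (hp : 0 ≤ p) (hpq : p < q)
    {F : Set (En n)} (hF : LocUnifPhiFat b p q F c 1) :
    IsUniformlyFat volume F p (c / volume.real (ball (0 : En n) 1)) := by
  intro z hz ρ hρ hρ1 v hv hvF hv0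
  have hV := measureReal_ball_pos (μ := volume) (0 : En n) one_pos
  have hbdd' : BddAbove ((fun x => b (z + ρ • x)) '' ball 0 1) := by
    refine (hbdd z ρ).mono ?_
    rintro _ ⟨x, hx, rfl⟩
    refine mem_image_of_mem b ?_
    rw [mem_ball_zero_iff] at hx
    rw [mem_ball, dist_self_add_left, norm_smul, Real.norm_of_nonneg hρ.le]
    exact mul_lt_of_lt_one_right hρ hx
  have hcap := (hF z hz ρ hρ hρ1).trans (capPhiInf_le_integral_rpow (fun x => hb _) hbdd' hp hpq
    isOpen_ball measure_ball_lt_top.ne (comp_add_smul_mem_Adm hv hρ hvF hv0))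
  have hgrad (x : En n) : gnorm (fun y => v (z + ρ • y)) x ^ p
      = ρ ^ p * gnorm v (z + ρ • x) ^ p := by
    rw [gnorm_comp_add_smul v z hρ.le, Real.mul_rpow hρ.le (by exact norm_nonneg _)]
  simp only [hgrad, integral_const_mul] at hcap
  calc c / volume.real (ball (0 : En n) 1) * volume.real (ball z ρ)
      = ρ ^ finrank ℝ (En n) * c := by
        rw [← mul_one ρ, measureReal_ball_mul z (0 : En n) hρ, mul_one]
        field_simp
    _ ≤ ρ ^ finrank ℝ (En n) * (ρ ^ p * ∫ x in ball (0 : En n) 1, gnorm v (z + ρ • x) ^ p) := by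
        gcongr
    _ = ρ ^ p * ∫ x in ball z ρ, ‖fderiv ℝ v x‖ ^ p := by
        rw [← setIntegral_comp_add_smul volume _ z hρ, smul_eq_mul]
        exact mul_left_comm _ _ _

end Rescaling

section ZeroExtension

variable {V W : Type*} [NormedAddCommGroup V] [NormedSpace ℝ V]
  [SeminormedAddCommGroup W] {O : Set V} {u : V → W} {K : NNReal}

lemma exists_mem_segment_mem_frontier {x y : V} (hO : IsOpen O) (hx : x ∈ O) (hy : y ∉ O) :
    ∃ w ∈ segment ℝ x y, w ∈ frontier O := by
  by_contra! h
  rw [hO.frontier_eq] at h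
  have hseg := (convex_segment x y).isPreconnected.subset_of_closure_inter_subset hO
    ⟨x, left_mem_segment ℝ x y, hx⟩ fun w hw => by_contra fun hwO => h w hw.2 ⟨hw.1, hwO⟩
  exact hy (hseg (right_mem_segment ℝ x y))

lemma lipschitzWith_indicator_of_isOpen (hO : IsOpen O) (hu : LipschitzOnWith K u (closure O))
    (hu0 : ∀ x ∈ frontier O, u x = 0) : LipschitzWith K (O.indicator u) := by
  have hcross {x y : V} (hx : x ∈ O) (hy : y ∉ O) : dist (u x) 0 ≤ K * dist x y := by
    obtain ⟨w, hw, hwO⟩ := exists_mem_segment_mem_frontier hO hx hy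
    rw [← hu0 w hwO]
    refine (hu.dist_le_mul x (subset_closure hx) w (frontier_subset_closure hwO)).trans ?_
    gcongr
    rw [← dist_add_dist_of_mem_segment hw]
    exact le_add_of_nonneg_right dist_nonneg
  refine LipschitzWith.of_dist_le_mul fun x y => ?_
  by_cases hx : x ∈ O <;> by_cases hy : y ∈ O
  · simp only [indicator_of_mem hx, indicator_of_mem hy]
    exact hu.dist_le_mul x (subset_closure hx) y (subset_closure hy)
  · simp only [indicator_of_mem hx, indicator_of_notMem hy]
    exact hcross hx hy
  · simp only [indicator_of_notMem hx, indicator_of_mem hy]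
    rw [dist_comm, dist_comm x]
    exact hcross hy hx
  · simp only [indicator_of_notMem hx, indicator_of_notMem hy, dist_self]
    positivity

lemma norm_fderiv_comp_le {V' W' : Type*} [NormedAddCommGroup V'] [NormedSpace ℝ V']
    [NormedAddCommGroup W'] [NormedSpace ℝ W'] {h : V' → W'} {L : NNReal} (hh : LipschitzWith L h)
    {v : V → V'} {x : V} (hv : DifferentiableAt ℝ v x) :
    ‖fderiv ℝ (h ∘ v) x‖ ≤ L * ‖fderiv ℝ v x‖ := by
  have hlim : Filter.Tendsto (fun c : ℝ => L * (‖fderiv ℝ v x‖ + c)) (nhdsWithin 0 (Ioi 0))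
      (nhds (L * (‖fderiv ℝ v x‖ + 0))) :=
    ((Continuous.tendsto (by fun_prop) 0).mono_left nhdsWithin_le_nhds)
  rw [add_zero] at hlim
  refine ge_of_tendsto hlim ?_
  filter_upwards [self_mem_nhdsWithin] with c (hc : 0 < c)
  refine norm_fderiv_le_of_lip' ℝ (by positivity) ?_
  filter_upwards [hv.hasFDerivAt.isLittleO.def hc] with y hy
  calc ‖h (v y) - h (v x)‖ ≤ L * ‖v y - v x‖ := hh.norm_sub_le _ _
    _ ≤ L * (‖fderiv ℝ v x‖ * ‖y - x‖ + c * ‖y - x‖) := by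
        gcongr
        rw [← add_sub_cancel (fderiv ℝ v x (y - x)) (v y - v x)]
        exact norm_add_le_of_le (ContinuousLinearMap.le_opNorm _ _) hy
    _ = _ := by ring

end ZeroExtension

section PowerEnergy

variable {n : ℕ} {E F O : Set (En n)} {u : En n → ℝ} {K : NNReal} {t : ℝ}

lemma ae_gnorm_indicator (hO : IsOpen O) (hu : LipschitzOnWith K u (closure O))
    (hu0 : ∀ x ∈ frontier O, u x = 0) :
    ∀ᵐ x, gnorm (O.indicator u) x = O.indicator (gnorm u) x := by
  filter_upwards [ae_fderiv_eq_of_eqOn (μ := volume)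
    (lipschitzWith_indicator_of_isOpen hO hu hu0) (LipschitzWith.const (0 : ℝ))
    hO.measurableSet.compl fun x hx => indicator_of_notMem hx u] with x hx
  by_cases hxO : x ∈ O
  · have heq : O.indicator u =ᶠ[nhds x] u :=
      Filter.eventuallyEq_of_mem (hO.mem_nhds hxO) fun y hy => indicator_of_mem hy u
    rw [indicator_of_mem hxO, gnorm, heq.fderiv_eq, gnorm]
  · rw [indicator_of_notMem hxO, gnorm, hx hxO, fderiv_fun_const, Pi.zero_apply, norm_zero]

lemma exists_isCotest_of_mem_Adm (ht : 0 < t)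
    (hu : u ∈ Adm (F ∩ closedBall 0 (1 / 2)) (ball 0 1) t) :
    ∃ f, IsCotest F f ∧ (∀ x ∉ ball 0 1, f x = 1) ∧
      ∀ᵐ x, ‖fderiv ℝ f x‖ ≤ (ball 0 1).indicator (fun x => gnorm u x / t) x := by
  obtain ⟨⟨K, hK⟩, huF, hu0⟩ := hu
  set B : Set (En n) := ball 0 1
  have hv : LipschitzWith K (B.indicator u) := lipschitzWith_indicator_of_isOpen isOpen_ball hK hu0
  set h : ℝ → ℝ := fun y => max (min (1 - t⁻¹ * y) 1) 0
  have hh : LipschitzWith ‖t⁻¹‖₊ h := by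
    simpa using ((((LipschitzWith.const (1 : ℝ)).sub (lipschitzWith_smul t⁻¹)).min_const
      1).max_const 0)
  refine ⟨h ∘ B.indicator u, ⟨⟨_, hh.comp hv⟩, fun x => le_max_right _ _,
    fun x => max_le (min_le_right _ _) zero_le_one, fun x hx => ?_⟩, fun x hx => ?_, ?_⟩
  · have hxB : x ∈ B := closedBall_subset_ball (by norm_num) hx.2
    have htu : 1 ≤ t⁻¹ * u x := by
      rw [inv_mul_eq_div, one_le_div₀ ht]
      exact huF x hx
    rw [Function.comp_apply, indicator_of_mem hxB]
    exact max_eq_right ((min_le_left _ _).trans (sub_nonpos.2 htu))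
  · simp [h, indicator_of_notMem hx]
  · filter_upwards [hv.ae_differentiableAt, ae_gnorm_indicator isOpen_ball hK hu0]
      with x hx (hxB : gnorm (B.indicator u) x = B.indicator (gnorm u) x)
    calc ‖fderiv ℝ (h ∘ B.indicator u) x‖ ≤ t⁻¹ * gnorm (B.indicator u) x := by
          simpa [Real.norm_of_nonneg ht.le, gnorm] using norm_fderiv_comp_le hh hx
      _ = B.indicator (fun x => gnorm u x / t) x := by
          rw [hxB]
          by_cases hx1 : x ∈ B <;> simp [hx1, inv_mul_eq_div]

lemma integrableOn_div_rpow (hO : IsOpen O) (hvol : volume O ≠ ⊤)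
    (hu : LipschitzOnWith K u (closure O)) {s : ℝ} (hs : 0 ≤ s) (ht : 0 ≤ t) :
    IntegrableOn (fun x => (gnorm u x / t) ^ s) O := by
  have h (x : En n) : (gnorm u x / t) ^ s = gnorm u x ^ s / t ^ s :=
    Real.div_rpow (norm_nonneg _) ht s
  simp only [h]
  exact (integrableOn_gnorm_rpow hO hvol hu hs).div_const _

lemma le_integral_div_rpow_of_mem_Adm {s c' : ℝ} (hs : 0 < s)
    (hF : ∀ f, IsCotest F f → (∀ x ∉ ball 0 1, f x = 1) →
      ENNReal.ofReal c' ≤ ∫⁻ x, ENNReal.ofReal (‖fderiv ℝ f x‖ ^ s))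
    (ht : 0 < t) (hu : u ∈ Adm (F ∩ closedBall 0 (1 / 2)) (ball 0 1) t) :
    c' ≤ ∫ x in ball 0 1, (gnorm u x / t) ^ s := by
  obtain ⟨f, hf, hf1, hfu⟩ := exists_isCotest_of_mem_Adm ht hu
  obtain ⟨K, hK⟩ := hu.1
  have hnonneg (x : En n) : 0 ≤ gnorm u x / t := div_nonneg (norm_nonneg _) ht.le
  rw [← ENNReal.ofReal_le_ofReal_iff (integral_nonneg fun x => Real.rpow_nonneg (hnonneg x) s),
    ofReal_integral_eq_lintegral_ofReal
      (integrableOn_div_rpow isOpen_ball measure_ball_lt_top.ne hK hs.le ht.le)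
      (.of_forall fun x => Real.rpow_nonneg (hnonneg x) s),
    ← lintegral_indicator measurableSet_ball]
  refine (hF f hf hf1).trans (lintegral_mono_ae ?_)
  filter_upwards [hfu] with x hx
  by_cases hxB : x ∈ ball (0 : En n) 1
  · rw [indicator_of_mem hxB] at hx ⊢
    gcongr
  · rw [indicator_of_notMem hxB] at hx ⊢
    rw [le_antisymm hx (norm_nonneg _), Real.zero_rpow hs.ne', ENNReal.ofReal_zero]

variable {b : En n → ℝ} {p q γ : ℝ}

lemma integrableOn_phi_rpow_div (hb : ∀ x, 0 ≤ b x) (hbm : Measurable b)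
    (hbO : BddAbove (b '' O)) (hp : 0 ≤ p) (hq : 0 ≤ q) (hγ : 0 ≤ γ) (hO : IsOpen O)
    (hvol : volume O ≠ ⊤) (hu : LipschitzOnWith K u (closure O)) (m : ℝ) :
    IntegrableOn (fun x => phi b p q x (gnorm u x) ^ γ / m) O := by
  obtain ⟨M, hM⟩ := hbO
  have hgm := measurable_gnorm u
  have hφm : Measurable fun x => phi b p q x (gnorm u x) ^ γ := by
    unfold phi
    fun_prop
  suffices IntegrableOn (fun x => phi b p q x (gnorm u x) ^ γ) O from this.div_const m
  refine Measure.integrableOn_of_bounded (M := ((K : ℝ) ^ p + M * (K : ℝ) ^ q) ^ γ) hvol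
    hφm.aestronglyMeasurable ?_
  filter_upwards [ae_restrict_mem hO.measurableSet] with x hx
  have hg : 0 ≤ gnorm u x := norm_nonneg _
  have hgK := gnorm_le_of_lipschitzOnWith hO hu hx
  have hbM : b x ≤ M := hM (mem_image_of_mem b hx)
  have hM0 := (hb x).trans hbM
  have hφ := phi_nonneg hb p q x hg
  rw [Real.norm_of_nonneg (by positivity)]
  unfold phi at hφ ⊢
  gcongr

lemma mul_integral_sub_le_integral_phi_rpow_div (hb : ∀ x, 0 ≤ b x) (hbm : Measurable b)
    (hbO : BddAbove (b '' O)) (hp : 0 ≤ p) (hpq : p ≤ q) (hγ : 0 ≤ γ) (hO : IsOpen O)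
    (hvol : volume O ≠ ⊤) (hu : LipschitzOnWith K u (closure O)) (ht : 0 < t) {δ : ℝ}
    (hδ : 0 < δ) (hδ1 : δ ≤ 1) :
    δ ^ ((q - p) * γ) *
        ((∫ x in O, (gnorm u x / t) ^ (p * γ)) - volume.real O * δ ^ (p * γ)) ≤
      ∫ x in O, phi b p q x (gnorm u x) ^ γ / phiMinus b p q O t ^ γ := by
  have h_int := integrableOn_div_rpow hO hvol hu (mul_nonneg hp hγ) ht.le
  have hconst : IntegrableOn (fun _ => δ ^ (p * γ)) O volume := integrableOn_const hvol
  rw [← smul_eq_mul (volume.real O), ← setIntegral_const, ← integral_sub h_int hconst,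
    ← integral_const_mul]
  exact setIntegral_mono_on ((h_int.sub hconst).const_mul _)
    (integrableOn_phi_rpow_div hb hbm hbO hp (hp.trans hpq) hγ hO hvol hu _) hO.measurableSet
    fun x hx => mul_rpow_sub_le_phi_rpow_div hb hp hpq ht hγ hδ hδ1 (norm_nonneg _) hx

end PowerEnergy

lemma bddAbove_image_comp_add_smul {V : Type*} [NormedAddCommGroup V] [NormedSpace ℝ V] {a : V → ℝ}
    (ha : ∀ z r, BddAbove (a '' ball z r)) (w : V) {s : ℝ} (hs : 0 < s) (z : V) (r : ℝ) :
    BddAbove ((fun x => a (w + s • x)) '' ball z r) := by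
  refine (ha (w + s • z) (s * r)).mono ?_
  rintro _ ⟨x, hx, rfl⟩
  refine mem_image_of_mem a ?_
  rw [mem_ball, dist_add_left, dist_smul₀, Real.norm_of_nonneg hs.le]
  exact mul_lt_mul_of_pos_left hx hs

lemma continuous_of_abs_sub_le {X : Type*} [PseudoMetricSpace X] {a : X → ℝ} {A α : ℝ}
    (hα : 0 < α) (ha : ∀ x y, |a x - a y| ≤ A * dist x y ^ α) : Continuous a := by
  refine continuous_iff_continuousAt.2 fun x => tendsto_iff_dist_tendsto_zero.2
    (squeeze_zero (fun _ => dist_nonneg) (fun y => ha y x) ?_)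
  have hlim : Continuous fun y => A * dist y x ^ α :=
    ((continuous_id.dist continuous_const).rpow_const fun _ => .inr hα.le).const_mul A
  simpa [Real.zero_rpow hα.ne'] using hlim.tendsto x

lemma bddAbove_image_ball {X : Type*} [PseudoMetricSpace X] [ProperSpace X] {a : X → ℝ}
    (ha : Continuous a) (z : X) (r : ℝ) : BddAbove (a '' ball z r) :=
  ((isCompact_closedBall z r).bddAbove_image ha.continuousOn).mono
    (image_mono ball_subset_closedBall)

lemma le_capInfGen_phi_rpow {n : ℕ} {b : En n → ℝ} (hb : ∀ x, 0 ≤ b x) (hbm : Measurable b)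
    (hbB : BddAbove (b '' ball 0 1)) {p q γ c' δ : ℝ} (hp : 0 ≤ p) (hpq : p ≤ q)
    (hγ : 1 ≤ p * γ) (hδ : 0 < δ) (hδ1 : δ ≤ 1)
    (hδc : volume.real (ball (0 : En n) 1) * δ ≤ c' / 2) {F : Set (En n)}
    (hF : ∀ f, IsCotest F f → (∀ x ∉ ball 0 1, f x = 1) →
      ENNReal.ofReal c' ≤ ∫⁻ x, ENNReal.ofReal (‖fderiv ℝ f x‖ ^ (p * γ))) :
    δ ^ ((q - p) * γ) * (c' / 2) ≤
      capInfGen (fun x s => phi b p q x s ^ γ) (fun s => phiMinus b p q (ball 0 1) s ^ γ)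
        (F ∩ closedBall 0 (1 / 2)) (ball 0 1) := by
  have hγ0 : 0 ≤ γ := (pos_of_mul_pos_right (one_pos.trans_le hγ) hp).le
  refine le_capInfGen (fun t ht => Adm_nonempty inter_subset_right ht.le) fun t ht u hu => ?_
  obtain ⟨K, hK⟩ := hu.1
  have henergy := le_integral_div_rpow_of_mem_Adm (one_pos.trans_le hγ) hF ht hu
  have hδγ : volume.real (ball (0 : En n) 1) * δ ^ (p * γ) ≤ c' / 2 := by
    refine le_trans ?_ hδc
    gcongr
    exact Real.rpow_le_self_of_le_one hδ.le hδ1 hγ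
  refine le_trans ?_ (mul_integral_sub_le_integral_phi_rpow_div hb hbm hbB hp hpq hγ0 isOpen_ball
    measure_ball_lt_top.ne hK ht hδ hδ1)
  gcongr
  linarith

theorem phi_fatness_self_improving_general (n : ℕ) (hn : 0 < n) (p q cfat : ℝ) (hp : 1 < p)
    (hpq : p < q) (hcfat : 0 < cfat) :
    ∃ ε chat : ℝ, 0 < ε ∧ ε < p - 1 ∧ 0 < chat ∧
      ∀ (ro : ℝ) (a : En n → ℝ) (E : Set (En n)),
        (∀ x, 0 ≤ a x) → Measurable a → (∀ z r, BddAbove (a '' ball z r)) →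
        LocUnifPhiFat a p q E cfat ro → LocUnifPhiPowFat a p q (1 - ε / p) E chat ro := by
  have : Nonempty (Fin n) := ⟨⟨0, hn⟩⟩
  have hp0 : 0 < p := one_pos.trans hp
  set V := volume.real (ball (0 : En n) 1)
  have hV : 0 < V := measureReal_ball_pos 0 one_pos
  obtain ⟨ε, c', hε, hεp, hc', henergy⟩ :=
    exists_le_lintegral_rpow_norm_fderiv (volume : Measure (En n)) hp (div_pos hcfat hV)
  have hγ : p * (1 - ε / p) = p - ε := by field_simp
  set δ := min 1 (c' / (2 * V))
  have hδ : 0 < δ := lt_min one_pos (by positivity)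
  have hδc : V * δ ≤ c' / 2 := by
    calc V * δ ≤ V * (c' / (2 * V)) := by gcongr; exact min_le_right _ _
      _ = c' / 2 := by field_simp
  refine ⟨ε, δ ^ ((q - p) * (1 - ε / p)) * (c' / 2), hε, hεp, by positivity, ?_⟩
  intro ro a E ha ham habdd hE z hz r hr hrro
  have hFfat : IsUniformlyFat volume {x | z + r • x ∈ E} p (cfat / V) :=
    isUniformlyFat_of_locUnifPhiFat (fun x => ha _) (bddAbove_image_comp_add_smul habdd z hr) hp0.le
      hpq (hE.comp_add_smul z hr hrro.le)
  have hshift : shiftedSet E z r = {x | z + r • x ∈ E} ∩ closedBall 0 (1 / 2) := inter_comm _ _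
  rw [hshift]
  refine le_capInfGen_phi_rpow (fun x => ha _) (ham.comp (by fun_prop))
    (bddAbove_image_comp_add_smul habdd z hr 0 1) hp0.le hpq.le (by linarith) hδ
    (min_le_left _ _) hδc ?_
  rw [hγ]
  exact henergy _ (by simpa using hz) hFfat

/-- **Self-improvement of the infimal `φ`-fatness condition** (Lemma 3.2):
if a closed set `E` is locally uniformly infimally `φ`-fat with constant
`c_fat` and radius `r_o`, then there are `ε = ε(n,p,q,c_fat) ∈ (0,p-1)`,
`ĉ_fat = ĉ_fat(n,p,q,c_fat) > 0` and a radius `r̂_o = r̂_o(n,p,q,r_o) ∈ (0,1]`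
such that `E` is locally uniformly infimally `φ^{1-ε/p}`-fat with constant
`ĉ_fat` and radius `r̂_o`. -/
theorem phi_fatness_self_improving
    (n : ℕ) (hn : 0 < n) (p q cfat : ℝ)
    (hp : 1 < p) (hpq : p < q) (hcfat : 0 < cfat) :
    ∃ ε chat : ℝ, 0 < ε ∧ ε < p - 1 ∧ 0 < chat ∧
      ∀ ro : ℝ, 0 < ro → ro ≤ 1 →
        ∃ rhat : ℝ, 0 < rhat ∧ rhat ≤ 1 ∧
          ∀ (α A : ℝ) (a : En n → ℝ) (E : Set (En n)),
            0 < α → α ≤ 1 → (∀ x, 0 ≤ a x) → 0 ≤ A →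
            (∀ x y, |a x - a y| ≤ A * dist x y ^ α) →
            IsClosed E → LocUnifPhiFat a p q E cfat ro →
            LocUnifPhiPowFat a p q (1 - ε / p) E chat rhat := by
  obtain ⟨ε, chat, hε, hεp, hchat, h⟩ :=
    phi_fatness_self_improving_general n hn p q cfat hp hpq hcfat
  exact ⟨ε, chat, hε, hεp, hchat, fun ro hro hro1 => ⟨ro, hro, hro1, fun α A a E hα _ ha _ haA _ =>
    h ro a E ha (continuous_of_abs_sub_le hα haA).measurable
      (bddAbove_image_ball (continuous_of_abs_sub_le hα haA))⟩⟩
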